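/- arXiv:2004.01214 — 3 statements merged into one kernel-verified Lean document; each statement's English description precedes it below -/
import Mathlib

section
/- Let d ≥ 0 and let G be a finite abelian group of order 2^{2d+2}. Then G contains a Hadamard difference set if and only if the exponent of G is at most 2^{d+2}. -/
/-!
Replacing a subset by the function that is `-1` on it and `1` elsewhere, Hadamard difference sets in
a non-trivial `G` become `±1`-valued functions with autocorrelation `|G| δ₁`, called bent functions
below (`IsHadamardGroup.hasBent`, `HasBent.isHadamardGroup`).

*Sufficiency.* Mutually uncorrelated functions on a subgroup `H` can be placed on the cosets of `H`,
and the autocorrelations add up (`exists_glue`). The blocks are pulled back from quotients of `H`;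
they are uncorrelated since for any two of them there is an involution under which one is invariant
and the other anti-invariant. For this one needs *relative* bent functions, with autocorrelation
`|G| (δ₁ - δᵤ)` for an involution `u`. They exist when `|G| = 2 ^ (2 * m + 1)` and the exponent is
at most `2 ^ (m + 1)`, by induction using a subgroup of index `2` and two quotients of it
(`hasRelBent`). Bent functions for `|G| = 2 ^ (2 * n)` and exponent at most `2 ^ (n + 1)` follow by
an induction from `n` to `n + 2`, with a subgroup of index `4`, three quotients of it by subgroups
of order `2` that carry relative bent functions, and one quotient by a four-group that carries a
bent function (`hasBent`). Subgroups of sufficiently small exponent are found by counting torsion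
(`exists_index_two`).

*Necessity.* This is Turyn's argument (`HasBent.exponent_le`). If the exponent is `2 ^ (s + 1)`,
some character `χ` of that order takes values in `ℤ[ζ]`, `ζ` a primitive `2 ^ (s + 1)`-th root of
unity. The sum `S = ∑ f x * χ x` has squared modulus `|G| = 2 ^ (2 * d + 2)`. The element `1 - ζ` is
the only prime above `2`, it is associated to its conjugate, and `2` is associated to
`(1 - ζ) ^ 2 ^ s`; therefore `2 ^ (d + 1)` divides `S` (`CycRing.two_pow_dvd`). A non-zero
coordinate of `S` in the basis of powers of `ζ` is thus at least `2 ^ (d + 1)` in absolute value, but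
it is at most the order `|G| / 2 ^ s` of the kernel of `χ ^ 2`, which gives `s ≤ d + 1`.
-/

/-- `D` is a Hadamard difference set in the finite group `G`: for some `k`, `l`,
`D` is a `(v,k,l)`-difference set (every non-identity `g` has exactly `l`
representations `x * y⁻¹` with `x, y ∈ D`) whose parameters satisfy `v = 4 * (k - l)`. -/
def IsHadamardDiffSet {G : Type*} [Group G] (D : Set G) : Prop :=
  ∃ k l : ℕ,
    Nat.card D = k ∧
    (∀ g : G, g ≠ 1 → Nat.card {p : D × D // (p.1 : G) * (p.2 : G)⁻¹ = g} = l) ∧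
    Nat.card G + 4 * l = 4 * k

/-- A group is a Hadamard group if it contains a Hadamard difference set. -/
def IsHadamardGroup (G : Type*) [Group G] : Prop :=
  ∃ D : Set G, IsHadamardDiffSet D

/-! ### Correlations -/

/-- The (unnormalised) correlation of two integer-valued functions on a finite group. -/
noncomputable def corr {G : Type*} [Group G] (f g : G → ℤ) (y : G) : ℤ :=
  ∑ᶠ x, f x * g (x * y)

/-- A function with values in `{1, -1}`. -/
def IsSign {G : Type*} (f : G → ℤ) : Prop := ∀ x, f x = 1 ∨ f x = -1

lemma corr_eq_sum {G : Type*} [Group G] [Fintype G] (f g : G → ℤ) (y : G) :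
    corr f g y = ∑ x, f x * g (x * y) := finsum_eq_sum_of_fintype _

/-- Functions that are respectively anti-invariant and invariant under translation by the same
element are uncorrelated. -/
lemma corr_eq_zero_left {G : Type*} [CommGroup G] [Finite G] {f g : G → ℤ} (b : G)
    (hf : ∀ x, f (x * b) = -f x) (hg : ∀ x, g (x * b) = g x) (t : G) : corr f g t = 0 := by
  have := Fintype.ofFinite G
  rw [corr_eq_sum]
  have h : ∑ x, f (x * b) * g (x * b * t) = ∑ x, f x * g (x * t) :=
    Equiv.sum_comp (Equiv.mulRight b) fun x => f x * g (x * t)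
  have h2 : ∑ x, f (x * b) * g (x * b * t) = -∑ x, f x * g (x * t) := by
    rw [← Finset.sum_neg_distrib]
    refine Finset.sum_congr rfl fun x _ => ?_
    rw [hf, mul_right_comm x b t, hg, neg_mul]
  omega

lemma corr_eq_zero_right {G : Type*} [CommGroup G] [Finite G] {f g : G → ℤ} (b : G)
    (hf : ∀ x, f (x * b) = f x) (hg : ∀ x, g (x * b) = -g x) (t : G) : corr f g t = 0 := by
  have := Fintype.ofFinite G
  rw [corr_eq_sum]
  have h : ∑ x, f (x * b) * g (x * b * t) = ∑ x, f x * g (x * t) :=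
    Equiv.sum_comp (Equiv.mulRight b) fun x => f x * g (x * t)
  have h2 : ∑ x, f (x * b) * g (x * b * t) = -∑ x, f x * g (x * t) := by
    rw [← Finset.sum_neg_distrib]
    refine Finset.sum_congr rfl fun x _ => ?_
    rw [hf, mul_right_comm x b t, hg, mul_neg]
  omega

/-- An autocorrelation of the extreme value `-|G|` at `u` forces anti-invariance under `u`. -/
lemma apply_mul_eq_neg {G : Type*} [CommGroup G] [Finite G] {f : G → ℤ} (hf : IsSign f) {u : G}
    (h : corr f f u = -(Nat.card G : ℤ)) (x : G) : f (x * u) = -f x := by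
  have := Fintype.ofFinite G
  have h0 : ∑ x, (1 + f x * f (x * u)) = 0 := by
    rw [Finset.sum_add_distrib, ← corr_eq_sum, h]; simp [Nat.card_eq_fintype_card]
  have h1 : ∀ x, 0 ≤ 1 + f x * f (x * u) := fun x => by
    rcases hf x with h | h <;> rcases hf (x * u) with h' | h' <;> simp [h, h']
  have h2 := (Finset.sum_eq_zero_iff_of_nonneg fun x _ => h1 x).1 h0 x (Finset.mem_univ x)
  rcases hf x with h | h <;> rcases hf (x * u) with h' | h' <;> simp [h, h'] at h2 ⊢

/-- Pulling back along a surjection `G → L` multiplies correlations by `|G| / |L|`; the statement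
avoids the division. -/
lemma card_mul_corr_comp {G L : Type*} [CommGroup G] [Finite G] [CommGroup L] [Finite L]
    (π : G →* L) (hπ : Function.Surjective π) (f g : L → ℤ) (y : G) :
    (Nat.card L : ℤ) * corr (f ∘ π) (g ∘ π) y = Nat.card G * corr f g (π y) := by
  have := Fintype.ofFinite G
  have := Fintype.ofFinite L
  rw [corr_eq_sum, corr_eq_sum]
  set F : L → ℤ := fun z => f z * g (z * π y) with hF
  have h1 : ∀ z : L, ∑ x, F (π x * z) = ∑ x, F (π x) := fun z => by
    obtain ⟨w, rfl⟩ := hπ z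
    simp_rw [← map_mul]
    exact Equiv.sum_comp (Equiv.mulRight w) fun x => F (π x)
  have h2 : ∀ x : G, ∑ z, F (π x * z) = ∑ z, F z := fun x =>
    Equiv.sum_comp (Equiv.mulLeft (π x)) F
  have h3 : ∑ z, ∑ x, F (π x * z) = ∑ x, ∑ z, F (π x * z) := Finset.sum_comm
  simp_rw [h1, h2] at h3
  simpa [Nat.card_eq_fintype_card, hF] using h3

/-- Mutually uncorrelated functions on a subgroup `H`, placed on the cosets of `H`, give a function
on `G` whose autocorrelation is the sum of theirs on `H` and vanishes off `H`. -/
lemma exists_glue {G : Type*} [CommGroup G] [Finite G] (H : Subgroup G) {n : ℕ}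
    (hn : H.index = n) (F : Fin n → H → ℤ)
    (orth : ∀ i j, i ≠ j → ∀ t, corr (F i) (F j) t = 0) :
    ∃ f : G → ℤ, (∀ x, ∃ i h, f x = F i h) ∧
      (∀ y : H, corr f f (y : G) = ∑ i, corr (F i) (F i) y) ∧
      ∀ y, y ∉ H → corr f f y = 0 := by
  classical
  have := Fintype.ofFinite G
  have := Fintype.ofFinite H
  have := Fintype.ofFinite (G ⧸ H)
  let e : G ⧸ H ≃ Fin n := Finite.equivFinOfCardEq (by rw [← hn]; rfl)
  let s : G ⧸ H → G := Quotient.out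
  have hs : ∀ c, (QuotientGroup.mk (s c) : G ⧸ H) = c := fun c => Quotient.out_eq' c
  have hmem : ∀ x : G, (s (QuotientGroup.mk x))⁻¹ * x ∈ H := fun x =>
    QuotientGroup.eq.1 (hs _)
  let f : G → ℤ := fun x => F (e (QuotientGroup.mk x)) ⟨_, hmem x⟩
  have hfs : ∀ c (h : H) x, x = s c * h → f x = F (e c) h := by
    rintro c h x rfl
    have hc : (QuotientGroup.mk (s c * h) : G ⧸ H) = c := by
      rw [QuotientGroup.mk_mul_of_mem _ h.2, hs]
    have : ∀ c' (hm : (s c')⁻¹ * (s c * h) ∈ H), c' = c → F (e c') ⟨_, hm⟩ = F (e c) h := by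
      rintro c' hm rfl
      congr 1
      ext; simp
    exact this _ _ hc
  let E : (G ⧸ H) × H ≃ G :=
    { toFun := fun p => s p.1 * p.2
      invFun := fun x => (QuotientGroup.mk x, ⟨_, hmem x⟩)
      left_inv := by
        rintro ⟨c, h⟩
        have hc : (QuotientGroup.mk (s c * h) : G ⧸ H) = c := by
          rw [QuotientGroup.mk_mul_of_mem _ h.2, hs]
        ext
        · exact hc
        · simp [hc]
      right_inv := fun x => by simp }
  have key : ∀ y, corr f f y =
      ∑ c, ∑ h : H, F (e c) h * f (s c * h * y) := fun y => by
    rw [corr_eq_sum, ← Equiv.sum_comp E, Fintype.sum_prod_type]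
    refine Finset.sum_congr rfl fun c _ => Finset.sum_congr rfl fun h _ => ?_
    change f (s c * h) * _ = _
    rw [hfs c h _ rfl]
    rfl
  refine ⟨f, fun x => ⟨_, _, rfl⟩, fun y => ?_, fun y hy => ?_⟩
  · rw [key, ← Equiv.sum_comp e]
    refine Finset.sum_congr rfl fun c _ => ?_
    rw [corr_eq_sum]
    refine Finset.sum_congr rfl fun h _ => ?_
    rw [hfs c (h * y)]
    simp [mul_assoc]
  · rw [key]
    refine Finset.sum_eq_zero fun c _ => ?_
    -- translation by `y` moves the coset `c` to a different coset `c'`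
    set c' : G ⧸ H := c * QuotientGroup.mk y with hc'
    have hne : c ≠ c' := fun h => hy <| by
      rw [hc', left_eq_mul] at h
      exact (QuotientGroup.eq_one_iff y).1 h
    have hm : (s c')⁻¹ * (s c * y) ∈ H := QuotientGroup.eq.1 <| by
      rw [hs, QuotientGroup.mk_mul, hs]
    rw [← orth (e c) (e c') (e.injective.ne hne) ⟨_, hm⟩, corr_eq_sum]
    refine Finset.sum_congr rfl fun h _ => ?_
    rw [hfs c' (h * ⟨_, hm⟩)]
    simp only [Subgroup.coe_mul]
    rw [mul_left_comm (h : G), mul_inv_cancel_left, mul_left_comm, mul_assoc]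

/-! ### Torsion and subgroups of small exponent -/

section Torsion

variable {G : Type*} [CommGroup G]

/-- The `2 ^ j`-power map sends the `2 ^ (j + 1)`-torsion onto a group of order the index of the
`2 ^ j`-torsion in it. -/
lemma card_ker_succ (j : ℕ) :
    Nat.card (powMonoidHom (2 ^ (j + 1)) : G →* G).ker =
      Nat.card (powMonoidHom (2 ^ j) : G →* G).ker *
        Nat.card ((powMonoidHom (2 ^ (j + 1)) : G →* G).ker.map (powMonoidHom (2 ^ j))) := by
  set T := (powMonoidHom (2 ^ (j + 1)) : G →* G).ker with hT
  set φ : T →* G := (powMonoidHom (2 ^ j) : G →* G).comp T.subtype with hφ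
  have h1 := φ.ker.card_mul_index
  rw [Subgroup.index_ker] at h1
  have h2 : φ.range = T.map (powMonoidHom (2 ^ j)) := by
    rw [hφ, MonoidHom.range_comp, Subgroup.range_subtype]
  have h3 : φ.ker.map T.subtype = (powMonoidHom (2 ^ j) : G →* G).ker := by
    ext x
    simp only [Subgroup.mem_map, MonoidHom.mem_ker, hφ, MonoidHom.comp_apply,
      Subgroup.coe_subtype, powMonoidHom_apply, Subtype.exists, hT]
    constructor
    · rintro ⟨a, _, h, rfl⟩; exact h
    · intro h; exact ⟨x, by rw [pow_succ, pow_mul, h, one_pow], h, rfl⟩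
  rw [← h1, h2, ← h3]
  congr 1
  exact (Subgroup.card_map_of_injective T.subtype_injective).symm

variable [Finite G]

lemma card_ker_le (j : ℕ) :
    Nat.card (powMonoidHom (2 ^ j) : G →* G).ker ≤
      Nat.card (powMonoidHom 2 : G →* G).ker ^ j := by
  induction j with
  | zero =>
    have : (powMonoidHom (2 ^ 0) : G →* G).ker = ⊥ := by
      ext x; simp [MonoidHom.mem_ker]
    rw [this]; simp
  | succ j ih =>
    rw [card_ker_succ, pow_succ]
    refine Nat.mul_le_mul ih (Subgroup.card_le_of_le ?_)
    rintro _ ⟨x, hx, rfl⟩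
    have hx : x ^ 2 ^ (j + 1) = 1 := hx
    simpa [MonoidHom.mem_ker, ← pow_mul, ← pow_succ] using hx

/-- If `G` has exponent dividing `2 ^ (k + 1)`, each of the successive quotients of the chain of
`2 ^ j`-torsion subgroups, `j ≤ k + 1`, is at least as large as the image of `x ↦ x ^ 2 ^ k`. -/
lemma card_range_pow_le {k : ℕ} (hk : ∀ x : G, x ^ 2 ^ (k + 1) = 1) (j : ℕ) (hj : j ≤ k + 1) :
    Nat.card (powMonoidHom (2 ^ k) : G →* G).range ^ j ≤
      Nat.card (powMonoidHom (2 ^ j) : G →* G).ker := by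
  induction j with
  | zero => simp
  | succ j ih =>
    rw [card_ker_succ, pow_succ]
    refine Nat.mul_le_mul (ih (by omega)) (Subgroup.card_le_of_le ?_)
    rintro _ ⟨x, rfl⟩
    refine ⟨x ^ 2 ^ (k - j), ?_, ?_⟩
    · have h : x ^ 2 ^ (k + 1) = 1 := hk x
      change (x ^ 2 ^ (k - j)) ^ 2 ^ (j + 1) = 1
      rwa [← pow_mul, ← pow_add, show k - j + (j + 1) = k + 1 by omega]
    · simp [← pow_mul, ← pow_add, show k - j + j = k by omega]

/-- If `|G| = 2 ^ N < 4 ^ (k + 1)` and the exponent of `G` divides `2 ^ (k + 1)`, then at most one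
cyclic factor of `G` has order `2 ^ (k + 1)`: the image of `x ↦ x ^ 2 ^ k` has order at most `2`.
So its kernel contains a subgroup of index `2` in `G` through any given involution. -/
lemma exists_index_two {N k : ℕ} (hN : 2 ≤ N) (hk1 : 1 ≤ k) (hNk : N < 2 * (k + 1))
    (hcard : Nat.card G = 2 ^ N) (hk : ∀ x : G, x ^ 2 ^ (k + 1) = 1) (u : G) (hu : u ^ 2 = 1) :
    ∃ H : Subgroup G, Nat.card H = 2 ^ (N - 1) ∧ H.index = 2 ∧ u ∈ H ∧
      ∀ x ∈ H, x ^ 2 ^ k = 1 := by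
  set K := (powMonoidHom (2 ^ k) : G →* G).ker with hK
  set I := (powMonoidHom (2 ^ k) : G →* G).range with hI
  have hKI : Nat.card K * Nat.card I = 2 ^ N := by
    rw [← hcard, ← K.card_mul_index, hK, Subgroup.index_ker]
  have hI4 : Nat.card I < 4 := by
    by_contra! h
    have h1 : Nat.card I ^ (k + 1) ≤ _ := card_range_pow_le hk (k + 1) le_rfl
    have h2 := Subgroup.card_le_card_group (powMonoidHom (2 ^ (k + 1)) : G →* G).ker
    have h3 : 4 ^ (k + 1) ≤ Nat.card I ^ (k + 1) := Nat.pow_le_pow_left h _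
    have h4 : 2 ^ N < 2 ^ (2 * (k + 1)) := Nat.pow_lt_pow_right (by norm_num) hNk
    rw [pow_mul] at h4
    rw [hcard] at h2
    norm_num at h4
    omega
  have hKd : 2 ^ (N - 1) ∣ Nat.card K := by
    obtain ⟨i, _, hi⟩ := (Nat.dvd_prime_pow Nat.prime_two).1 (Dvd.intro_left _ hKI)
    obtain ⟨s, _, hs⟩ := (Nat.dvd_prime_pow Nat.prime_two).1 (Dvd.intro _ hKI)
    have hi2 : i < 2 := by
      rw [hi] at hI4
      exact (Nat.pow_lt_pow_iff_right (a := 2) (by norm_num)).1 (by simpa using hI4)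
    rw [hi, hs, ← pow_add] at hKI
    have := Nat.pow_right_injective le_rfl hKI
    rw [hs]
    exact pow_dvd_pow _ (by omega)
  have huK : u ∈ K := by
    change u ^ 2 ^ k = 1
    obtain ⟨l, rfl⟩ := Nat.exists_eq_add_of_le hk1
    rw [pow_add, pow_mul, pow_one, hu, one_pow]
  obtain ⟨i, hi1, hi⟩ := (Nat.dvd_prime_pow Nat.prime_two (m := 1)).1
    (by simpa using orderOf_dvd_of_pow_eq_one hu)
  have : Fact (Nat.Prime 2) := ⟨Nat.prime_two⟩
  obtain ⟨H, hH, huH⟩ := Sylow.exists_subgroup_card_pow_prime_le (G := K) 2 hKd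
    (Subgroup.zpowers ⟨u, huK⟩) (n := i)
    (by rw [Nat.card_zpowers, ← hi]; exact Subgroup.orderOf_mk u huK) (by omega)
  have hcH : Nat.card (H.map K.subtype) = 2 ^ (N - 1) := by
    rw [Subgroup.card_map_of_injective K.subtype_injective, hH]
  refine ⟨H.map K.subtype, hcH, ?_, ⟨⟨u, huK⟩, huH (Subgroup.mem_zpowers _), rfl⟩, ?_⟩
  · have := (H.map K.subtype).card_mul_index
    have hN2 : 2 ^ N = 2 ^ (N - 1) * 2 := by rw [← pow_succ]; congr 1; omega
    rw [hcH, hcard, hN2] at this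
    exact Nat.eq_of_mul_eq_mul_left (by positivity : 0 < 2 ^ (N - 1)) this
  · rintro _ ⟨x, _, rfl⟩
    exact x.2

/-- A group of order `2 ^ N` whose exponent divides `2 ^ k`, `k < N`, is not cyclic, so it has
an involution different from a prescribed element `u`. -/
lemma exists_involution {N k : ℕ} (hNk : k < N)
    (hcard : Nat.card G = 2 ^ N) (hk : ∀ x : G, x ^ 2 ^ k = 1) (u : G) :
    ∃ a : G, a ^ 2 = 1 ∧ a ≠ 1 ∧ a ≠ u := by
  by_contra! h
  have hsub : ((powMonoidHom 2 : G →* G).ker : Set G) ⊆ {1, u} := fun x hx => by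
    by_cases h1 : x = 1
    · simp [h1]
    · simp [h x hx h1]
  have h2 : Nat.card (powMonoidHom 2 : G →* G).ker ≤ 2 := by
    calc _ = ((powMonoidHom 2 : G →* G).ker : Set G).ncard := rfl
      _ ≤ ({1, u} : Set G).ncard := Set.ncard_le_ncard hsub
      _ ≤ 2 := (Set.ncard_insert_le _ _).trans (by simp)
  have h3 : (powMonoidHom (2 ^ k) : G →* G).ker = ⊤ := by
    ext x; simpa [MonoidHom.mem_ker] using hk x
  have h4 := card_ker_le (G := G) k
  rw [h3, Subgroup.card_top, hcard] at h4
  have h5 := Nat.pow_le_pow_left h2 k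
  have h6 : 2 ^ k < 2 ^ N := Nat.pow_lt_pow_right (by norm_num) hNk
  omega

end Torsion

/-! ### Bent and relative bent functions -/

/-- `G` carries a `±1`-valued function whose autocorrelation is `|G| (δ₁ - δᵤ)`; equivalently,
its character sums vanish at characters trivial on `u` and have modulus `√(2|G|)` at the others. -/
def HasRelBent (G : Type*) [Group G] (u : G) : Prop :=
  ∃ f : G → ℤ, IsSign f ∧ ∀ y, (y = 1 → corr f f y = Nat.card G) ∧
    (y = u → corr f f y = -Nat.card G) ∧ (y ≠ 1 → y ≠ u → corr f f y = 0)

/-- `G` carries a `±1`-valued function with autocorrelation `|G| δ₁` (a bent function). The value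
at `1` is automatic, see `corr_self_one`. -/
def HasBent (G : Type*) [Group G] : Prop :=
  ∃ f : G → ℤ, IsSign f ∧ ∀ y, y ≠ 1 → corr f f y = 0

lemma corr_self_one {G : Type*} [Group G] [Finite G] {f : G → ℤ} (hf : IsSign f) :
    corr f f 1 = Nat.card G := by
  have := Fintype.ofFinite G
  rw [corr_eq_sum, Finset.sum_congr rfl fun x _ => (_ : f x * f (x * 1) = 1)]
  · simp
  · intro x _
    rcases hf x with h | h <;> simp [h]

section Involution

variable {G : Type*} [CommGroup G]

lemma mem_zpowers_involution {a : G} (ha : a ^ 2 = 1) (y : G) :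
    y ∈ Subgroup.zpowers a ↔ y = 1 ∨ y = a := by
  constructor
  · rintro ⟨n, rfl⟩
    rcases Int.even_or_odd' n with ⟨k, rfl | rfl⟩
    · left; simp [zpow_mul, ha, zpow_ofNat]
    · right; simp [zpow_add, zpow_mul, ha, zpow_ofNat]
  · rintro (rfl | rfl)
    · exact one_mem _
    · exact Subgroup.mem_zpowers _

lemma card_quotient_zpowers {a : G} (ha : a ^ 2 = 1) (ha1 : a ≠ 1) {n : ℕ}
    (h : Nat.card G = 2 ^ (n + 1)) : Nat.card (G ⧸ Subgroup.zpowers a) = 2 ^ n := by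
  have h1 := Subgroup.card_eq_card_quotient_mul_card_subgroup (Subgroup.zpowers a)
  rw [Nat.card_zpowers, orderOf_eq_prime ha ha1, h, pow_succ] at h1
  omega

variable [Finite G]

/-- Pulling back a relative bent function on `G / ⟨a⟩` to `G`. -/
lemma exists_lift {a u : G} (ha : a ^ 2 = 1)
    (h : HasRelBent (G ⧸ Subgroup.zpowers a) (u : G ⧸ Subgroup.zpowers a)) :
    ∃ F : G → ℤ, IsSign F ∧ (∀ x, F (x * a) = F x) ∧ (∀ x, F (x * u) = -F x) ∧
      ∀ y, (y = 1 ∨ y = a → corr F F y = Nat.card G) ∧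
        (y = u ∨ y = a * u → corr F F y = -Nat.card G) ∧
        (y ≠ 1 → y ≠ a → y ≠ u → y ≠ a * u → corr F F y = 0) := by
  obtain ⟨f, hf, hc⟩ := h
  set π := QuotientGroup.mk' (Subgroup.zpowers a) with hπ
  have hπa : π a = 1 := (QuotientGroup.eq_one_iff a).2 (Subgroup.mem_zpowers a)
  have hone : ∀ y, π y = 1 ↔ y = 1 ∨ y = a := fun y => by
    rw [← mem_zpowers_involution ha]; exact QuotientGroup.eq_one_iff y
  have hu : ∀ y, π y = π u ↔ y = u ∨ y = a * u := fun y => by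
    rw [← div_eq_one, ← map_div, hone, div_eq_one, div_eq_iff_eq_mul]
  have key : ∀ y, (Nat.card (G ⧸ Subgroup.zpowers a) : ℤ) * corr (f ∘ π) (f ∘ π) y =
      Nat.card G * corr f f (π y) :=
    card_mul_corr_comp π (QuotientGroup.mk'_surjective _) f f
  have hpos : (Nat.card (G ⧸ Subgroup.zpowers a) : ℤ) ≠ 0 := by
    exact_mod_cast Nat.card_pos.ne'
  refine ⟨f ∘ π, fun x => hf _, fun x => ?_, fun x => ?_, fun y => ⟨fun hy => ?_, fun hy => ?_,
    fun h1 h2 h3 h4 => ?_⟩⟩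
  · simp [hπa]
  · simp only [Function.comp_apply, map_mul]
    exact apply_mul_eq_neg hf ((hc _).2.1 rfl) _
  · have := key y
    rw [(hc _).1 ((hone y).2 hy), mul_comm] at this
    exact mul_right_cancel₀ hpos this
  · have := key y
    rw [(hc _).2.1 ((hu y).2 hy)] at this
    refine mul_left_cancel₀ hpos ?_
    rw [this]; ring
  · have := key y
    rw [(hc _).2.2 (by rw [Ne, hone]; tauto) (by change π y ≠ π u; rw [Ne, hu]; tauto)] at this
    rw [mul_zero] at this
    exact (mul_eq_zero.1 this).resolve_left hpos

end Involution

/-! ### Existence of relative bent functions -/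

universe v

/-- `hasRelBent` for groups of order `2 ^ (2 * m + 1)`, the statement proved by induction on `m`. -/
def RelBentStep (m : ℕ) : Prop :=
  ∀ (G : Type v) [CommGroup G] [Finite G] (u : G), Nat.card G = 2 ^ (2 * m + 1) →
    (∀ x : G, x ^ 2 ^ (m + 1) = 1) → u ≠ 1 → u ^ 2 = 1 → HasRelBent G u

/-- A group `L` of order `2 ^ (2 * m + 2)` and exponent dividing `2 ^ (m + 1)`, with distinct
involutions `a` and `u`, carries the pull-back of a relative bent function on `L / ⟨a⟩`. -/
lemma RelBentStep.exists_lift {m : ℕ} (ih : RelBentStep.{v} m) {L : Type v} [CommGroup L]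
    [Finite L] (hL : Nat.card L = 2 ^ (2 * m + 2)) (hexp : ∀ x : L, x ^ 2 ^ (m + 1) = 1)
    {a u : L} (ha : a ^ 2 = 1) (hu : u ^ 2 = 1) (ha1 : a ≠ 1) (hu1 : u ≠ 1) (hau : a ≠ u) :
    ∃ F : L → ℤ, IsSign F ∧ (∀ x, F (x * a) = F x) ∧ (∀ x, F (x * u) = -F x) ∧
      ∀ y, (y = 1 ∨ y = a → corr F F y = Nat.card L) ∧
        (y = u ∨ y = a * u → corr F F y = -Nat.card L) ∧
        (y ≠ 1 → y ≠ a → y ≠ u → y ≠ a * u → corr F F y = 0) := by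
  refine _root_.exists_lift ha (ih _ _ (card_quotient_zpowers ha ha1 hL) ?_ ?_ ?_)
  · intro x
    induction x using QuotientGroup.induction_on with
    | H x => rw [← QuotientGroup.mk_pow, hexp, QuotientGroup.mk_one]
  · rw [Ne, QuotientGroup.eq_one_iff, mem_zpowers_involution ha]
    tauto
  · rw [← QuotientGroup.mk_pow, hu, QuotientGroup.mk_one]

/-- Relative bent functions exist on groups of order `2 ^ (2 * m + 1)` and exponent dividing
`2 ^ (m + 1)`, with respect to any involution `u`. In the induction step, `H ∋ u` has index `2`, and
the two blocks come from `H / ⟨a⟩` and `H / ⟨a * u⟩` for an involution `a ≠ u` of `H`; one is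
invariant and the other anti-invariant under `a`. -/
lemma hasRelBent (m : ℕ) : RelBentStep.{v} m := by
  induction m with
  | zero =>
    intro G _ _ u hG _ hu1 hu
    classical
    have := Fintype.ofFinite G
    obtain ⟨w, _, hw⟩ := (Nat.card_eq_two_iff' (1 : G)).1 (by simpa using hG)
    have hall : ∀ x : G, x = 1 ∨ x = u := fun x => by
      by_cases h : x = 1
      · exact Or.inl h
      · exact Or.inr ((hw x h).trans (hw u hu1).symm)
    set f : G → ℤ := fun x => if x = 1 then 1 else -1 with hf
    have hfs : IsSign f := fun x => by by_cases h : x = 1 <;> simp [hf, h]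
    refine ⟨f, hfs, fun y => ⟨?_, ?_, fun h1 h2 => ((hall y).elim h1 h2).elim⟩⟩
    · rintro rfl
      exact corr_self_one hfs
    · rintro rfl
      rw [corr_eq_sum, Finset.sum_congr rfl fun x _ => (_ : f x * f (x * y) = -1)]
      · simp
      · intro x _
        rcases hall x with rfl | rfl
        · simp [hf, hu1]
        · simp [hf, hu1, ← pow_two, hu]
  | succ m ih =>
    intro G _ _ u hG hexp hu1 hu
    obtain ⟨H, hcH, hind, huH, hexpH⟩ := exists_index_two (N := 2 * (m + 1) + 1) (k := m + 1)
      (by omega) (by omega) (by omega) hG hexp u hu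
    replace hcH : Nat.card H = 2 ^ (2 * m + 2) := hcH
    replace hexpH : ∀ x : H, x ^ 2 ^ (m + 1) = 1 := fun x => Subtype.ext (hexpH x x.2)
    obtain ⟨v, rfl⟩ : ∃ v : H, (v : G) = u := ⟨⟨u, huH⟩, rfl⟩
    replace hu1 : v ≠ 1 := fun h => hu1 (by simp [h])
    replace hu : v ^ 2 = 1 := Subtype.ext hu
    obtain ⟨a, ha, ha1, hav⟩ := exists_involution (by omega) hcH hexpH v
    have hvv : v * v = 1 := by rw [← pow_two, hu]
    have hb : (a * v) ^ 2 = 1 := by rw [mul_pow, ha, hu, one_mul]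
    have hb1 : a * v ≠ 1 := fun h => hav (mul_right_cancel (h.trans hvv.symm))
    have hbv : a * v ≠ v := by simpa using ha1
    have habv : a * v * v = a := by rw [mul_assoc, hvv, mul_one]
    obtain ⟨F₁, hs₁, inv₁, anti₁, hc₁⟩ := ih.exists_lift hcH hexpH ha hu ha1 hu1 hav
    obtain ⟨F₂, hs₂, inv₂, anti₂, hc₂⟩ := ih.exists_lift hcH hexpH hb hu hb1 hu1 hbv
    have anti₂' : ∀ x, F₂ (x * a) = -F₂ x := fun x => by
      rw [← habv, ← mul_assoc, anti₂, inv₂]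
    obtain ⟨f, hf, hfH, hf0⟩ := exists_glue H hind ![F₁, F₂] (by
      intro i j hij t
      fin_cases i <;> fin_cases j <;> simp at hij ⊢
      · exact corr_eq_zero_right a inv₁ anti₂' t
      · exact corr_eq_zero_left a anti₂' inv₁ t)
    have hfs : IsSign f := fun x => by
      obtain ⟨i, h, hx⟩ := hf x
      rw [hx]
      fin_cases i
      · exact hs₁ h
      · exact hs₂ h
    have hGH : (Nat.card G : ℤ) = 2 * Nat.card H := by
      rw [← H.card_mul_index, hind]; push_cast; ring
    refine ⟨f, hfs, fun y => ⟨?_, ?_, fun h1 h2 => ?_⟩⟩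
    · rintro rfl
      exact corr_self_one hfs
    · rintro rfl
      rw [hfH, hGH]
      simp only [Fin.sum_univ_two, Matrix.cons_val_zero, Matrix.cons_val_one]
      rw [(hc₁ v).2.1 (Or.inl rfl), (hc₂ v).2.1 (Or.inl rfl)]
      ring
    · by_cases hy : y ∈ H
      · obtain ⟨z, rfl⟩ : ∃ z : H, (z : G) = y := ⟨⟨y, hy⟩, rfl⟩
        have hz1 : z ≠ 1 := fun h => h1 (by simp [h])
        have hzv : z ≠ v := fun h => h2 (by simp [h])
        rw [hfH]
        simp only [Fin.sum_univ_two, Matrix.cons_val_zero, Matrix.cons_val_one]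
        by_cases hza : z = a
        · rw [(hc₁ z).1 (Or.inr hza), (hc₂ z).2.1 (Or.inr (hza.trans habv.symm))]
          ring
        by_cases hzb : z = a * v
        · rw [(hc₁ z).2.1 (Or.inr hzb), (hc₂ z).1 (Or.inr hzb)]
          ring
        rw [(hc₁ z).2.2 hz1 hza hzv hzb, (hc₂ z).2.2 hz1 hzb hzv (by rwa [habv]), add_zero]
      · exact hf0 y hy

/-! ### Existence of bent functions -/

/-- The four-group generated by two commuting involutions. -/
def fourGroup {G : Type*} [CommGroup G] (a b : G) (ha : a ^ 2 = 1) (hb : b ^ 2 = 1) :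
    Subgroup G where
  carrier := {1, a, b, a * b}
  one_mem' := by simp
  mul_mem' := by
    have ha' : a * a = 1 := by rw [← pow_two, ha]
    have hb' : b * b = 1 := by rw [← pow_two, hb]
    have h1 : ∀ x, a * (a * x) = x := fun x => by rw [← mul_assoc, ha', one_mul]
    have h3 : b * a = a * b := mul_comm b a
    have h4 : ∀ x, b * (a * x) = a * (b * x) := mul_left_comm b a
    rintro x y (rfl | rfl | rfl | rfl) (rfl | rfl | rfl | rfl) <;>
      simp [ha', hb', h1, h3, h4, mul_assoc]
  inv_mem' := by
    have ha' : a⁻¹ = a := inv_eq_of_mul_eq_one_left (by rw [← pow_two, ha])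
    have hb' : b⁻¹ = b := inv_eq_of_mul_eq_one_left (by rw [← pow_two, hb])
    have h3 : b * a = a * b := mul_comm b a
    rintro x (rfl | rfl | rfl | rfl) <;> simp [ha', hb', h3]

lemma card_fourGroup {G : Type*} [CommGroup G] {a b : G} (ha : a ^ 2 = 1) (hb : b ^ 2 = 1)
    (ha1 : a ≠ 1) (hb1 : b ≠ 1) (hab : a ≠ b) : Nat.card (fourGroup a b ha hb) = 4 := by
  classical
  have hb' : b * b = 1 := by rw [← pow_two, hb]
  have h1 : a * b ≠ 1 := fun h => hab (mul_right_cancel (h.trans hb'.symm))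
  have : ((fourGroup a b ha hb : Subgroup G) : Set G) = (({1, a, b, a * b} : Finset G) : Set G) := by
    simp [fourGroup]
  change Nat.card ((fourGroup a b ha hb : Subgroup G) : Set G) = 4
  rw [this, Nat.card_coe_set_eq, Set.ncard_coe_finset, Finset.card_insert_of_notMem,
    Finset.card_insert_of_notMem, Finset.card_insert_of_notMem, Finset.card_singleton]
  · simpa using ha1
  · simp [hab, hb1]
  · simp [ha1.symm, hb1.symm, h1.symm]

/-- Two applications of `exists_index_two`, with prescribed element `1`. -/
lemma exists_index_four {G : Type*} [CommGroup G] [Finite G] {n : ℕ}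
    (hG : Nat.card G = 2 ^ (2 * n + 4)) (hexp : ∀ x : G, x ^ 2 ^ (n + 3) = 1) :
    ∃ H : Subgroup G, Nat.card H = 2 ^ (2 * n + 2) ∧ H.index = 4 ∧
      ∀ x : H, x ^ 2 ^ (n + 1) = 1 := by
  obtain ⟨H₁, hc₁, -, -, he₁⟩ := exists_index_two (N := 2 * n + 4) (k := n + 2)
    (by omega) (by omega) (by omega) hG hexp 1 (one_pow _)
  obtain ⟨H₂, hc₂, -, -, he₂⟩ := exists_index_two (G := H₁) (N := 2 * n + 3) (k := n + 1)
    (by omega) (by omega) (by omega) hc₁ (fun x => Subtype.ext (he₁ x x.2)) 1 (one_pow _)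
  have hc : Nat.card (H₂.map H₁.subtype) = 2 ^ (2 * n + 2) := by
    rw [Subgroup.card_map_of_injective H₁.subtype_injective]; exact hc₂
  refine ⟨H₂.map H₁.subtype, hc, ?_, ?_⟩
  · have := (H₂.map H₁.subtype).card_mul_index
    rw [hc, hG, show 2 * n + 4 = 2 * n + 2 + 2 by omega, pow_add _ (2 * n + 2) 2] at this
    exact Nat.eq_of_mul_eq_mul_left (by positivity) this
  · rintro ⟨_, x, hx, rfl⟩
    exact Subtype.ext (congrArg H₁.subtype (he₂ x hx))

/-- Bent functions exist on groups of order `2 ^ (2 * n)` and exponent dividing `2 ^ (n + 1)`. In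
the induction step from `n` to `n + 2`, a subgroup `H` of index `4` contains a four-group
`Q = {1, a, b, a * b}`. The blocks `A`, `B`, `C` are pulled back from relative bent functions on
`H / ⟨a⟩`, `H / ⟨b⟩`, `H / ⟨a * b⟩`, and `D` from a bent function on `H / Q`. -/
lemma hasBent (n : ℕ) : ∀ (G : Type v) [CommGroup G] [Finite G],
    Nat.card G = 2 ^ (2 * n) → (∀ x : G, x ^ 2 ^ (n + 1) = 1) → HasBent G := by
  induction n using Nat.twoStepInduction with
  | zero =>
    intro G _ _ hG _
    have : Subsingleton G := (Nat.card_eq_one_iff_unique.1 (by simpa using hG)).1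
    exact ⟨fun _ => 1, fun _ => Or.inl rfl, fun y hy => (hy (Subsingleton.elim _ _)).elim⟩
  | one =>
    intro G _ _ hG _
    classical
    have := Fintype.ofFinite G
    refine ⟨fun x => 1 - 2 * if x = 1 then 1 else 0, fun x => ?_, fun y hy => ?_⟩
    · by_cases h : x = 1 <;> simp [h]
    · have h : ∀ x : G, (1 - 2 * if x = 1 then 1 else 0) * (1 - 2 * if x * y = 1 then 1 else 0)
          = (1 - 2 * (if x = 1 then 1 else 0) - 2 * if x = y⁻¹ then 1 else 0 : ℤ) := by
        intro x
        by_cases h1 : x = 1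
        · subst h1; simp [hy, eq_comm (a := (1 : G))]
        · by_cases h2 : x = y⁻¹
          · subst h2; simp [hy]
          · have : x * y ≠ 1 := fun h => h2 (eq_inv_of_mul_eq_one_left h)
            simp [h1, h2, this]
      rw [corr_eq_sum, Finset.sum_congr rfl fun x _ => h x, Finset.sum_sub_distrib,
        Finset.sum_sub_distrib, ← Finset.mul_sum, ← Finset.mul_sum]
      simp only [Finset.sum_ite_eq', Finset.mem_univ, if_true, Finset.sum_const,
        Finset.card_univ, ← Nat.card_eq_fintype_card, hG]
      norm_num
  | more n ih _ =>
    intro G _ _ hG hexp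
    obtain ⟨H, hcH, hind, hexpH⟩ := exists_index_four (n := n) hG hexp
    obtain ⟨a, ha, ha1, -⟩ := exists_involution (by omega) hcH hexpH 1
    obtain ⟨b, hb, hb1, hba⟩ := exists_involution (by omega) hcH hexpH a
    have hc : (a * b) ^ 2 = 1 := by rw [mul_pow, ha, hb, one_mul]
    have hbb : b * b = 1 := by rw [← pow_two, hb]
    have haa : a * a = 1 := by rw [← pow_two, ha]
    have hc1 : a * b ≠ 1 := fun h => hba (mul_right_cancel (h.trans hbb.symm)).symm
    have hca : a * b ≠ a := by simpa using hb1
    have haba : a * b * a = b := by rw [mul_right_comm, haa, one_mul]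
    obtain ⟨A, sA, invA, antiA, cA⟩ :=
      (hasRelBent n).exists_lift hcH hexpH ha hb ha1 hb1 hba.symm
    obtain ⟨B, sB, invB, antiB, cB⟩ := (hasRelBent n).exists_lift hcH hexpH hb ha hb1 ha1 hba
    obtain ⟨C, sC, invC, antiC, cC⟩ := (hasRelBent n).exists_lift hcH hexpH hc ha hc1 ha1 hca
    have antiC' : ∀ x, C (x * b) = -C x := fun x => by
      rw [← haba, ← mul_assoc, antiC, invC]
    set Q := fourGroup a b ha hb with hQ
    have hmemQ : ∀ y, y ∈ Q ↔ y = 1 ∨ y = a ∨ y = b ∨ y = a * b := fun y => Iff.rfl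
    have hcQ : Nat.card (H ⧸ Q) = 2 ^ (2 * n) := by
      have h1 := Subgroup.card_eq_card_quotient_mul_card_subgroup Q
      rw [card_fourGroup ha hb ha1 hb1 hba.symm, hcH, pow_add] at h1
      omega
    obtain ⟨g, sg, cg⟩ := ih (H ⧸ Q) hcQ (fun x => by
      induction x using QuotientGroup.induction_on with
      | H x => rw [← QuotientGroup.mk_pow, hexpH, QuotientGroup.mk_one])
    set π := QuotientGroup.mk' Q with hπ
    have hπ1 : ∀ y, π y = 1 ↔ y ∈ Q := fun y => QuotientGroup.eq_one_iff y
    set D : H → ℤ := g ∘ π with hD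
    have invD : ∀ q ∈ Q, ∀ x, D (x * q) = D x := fun q hq x => by
      simp only [hD, Function.comp_apply, map_mul, (hπ1 q).2 hq, mul_one]
    have key : ∀ y, (Nat.card (H ⧸ Q) : ℤ) * corr D D y = Nat.card H * corr g g (π y) :=
      card_mul_corr_comp π (QuotientGroup.mk'_surjective _) g g
    have hpos : (Nat.card (H ⧸ Q) : ℤ) ≠ 0 := by exact_mod_cast Nat.card_pos.ne'
    have cD : ∀ y ∈ Q, corr D D y = Nat.card H := fun y hy => by
      have := key y
      rw [(hπ1 y).2 hy, corr_self_one sg, mul_comm] at this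
      exact mul_right_cancel₀ hpos this
    have cD' : ∀ y, y ∉ Q → corr D D y = 0 := fun y hy => by
      have := key y
      rw [cg _ (by rwa [Ne, hπ1]), mul_zero] at this
      exact (mul_eq_zero.1 this).resolve_left hpos
    have invDa := invD a (by simp [hmemQ])
    have invDb := invD b (by simp [hmemQ])
    obtain ⟨f, hf, hfH, hf0⟩ := exists_glue H hind ![A, B, C, D] (by
      intro i j hij t
      fin_cases i <;> fin_cases j <;> simp at hij ⊢
      · exact corr_eq_zero_left b antiA invB t
      · exact corr_eq_zero_right a invA antiC t
      · exact corr_eq_zero_left b antiA invDb t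
      · exact corr_eq_zero_right b invB antiA t
      · exact corr_eq_zero_right b invB antiC' t
      · exact corr_eq_zero_left a antiB invDa t
      · exact corr_eq_zero_left a antiC invA t
      · exact corr_eq_zero_left b antiC' invB t
      · exact corr_eq_zero_left a antiC invDa t
      · exact corr_eq_zero_right b invDb antiA t
      · exact corr_eq_zero_right a invDa antiB t
      · exact corr_eq_zero_right a invDa antiC t)
    refine ⟨f, fun x => ?_, fun y hy1 => ?_⟩
    · obtain ⟨i, h, hx⟩ := hf x
      rw [hx]
      fin_cases i
      · exact sA h
      · exact sB h
      · exact sC h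
      · exact sg _
    · by_cases hy : y ∈ H
      · obtain ⟨z, rfl⟩ : ∃ z : H, (z : G) = y := ⟨⟨y, hy⟩, rfl⟩
        have hz1 : z ≠ 1 := fun h => hy1 (by simp [h])
        rw [hfH]
        simp only [Fin.sum_univ_four, Matrix.cons_val]
        by_cases hza : z = a
        · rw [(cA z).1 (Or.inr hza), (cB z).2.1 (Or.inl hza), (cC z).2.1 (Or.inl hza),
            cD z (by simp [hmemQ, hza])]
          ring
        by_cases hzb : z = b
        · rw [(cA z).2.1 (Or.inl hzb), (cB z).1 (Or.inr hzb),
            (cC z).2.1 (Or.inr (hzb.trans haba.symm)), cD z (by simp [hmemQ, hzb])]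
          ring
        by_cases hzc : z = a * b
        · rw [(cA z).2.1 (Or.inr hzc), (cB z).2.1 (Or.inr (hzc.trans (mul_comm a b))),
            (cC z).1 (Or.inr hzc), cD z (by simp [hmemQ, hzc])]
          ring
        rw [(cA z).2.2 hz1 hza hzb hzc, (cB z).2.2 hz1 hzb hza (by rwa [mul_comm b a]),
          (cC z).2.2 hz1 hzc hza (by rwa [haba]), cD' z (by rw [hmemQ]; tauto)]
        ring
      · exact hf0 y hy

/-! ### Difference sets and bent functions -/

/-- The autocorrelation of the `±1`-valued function that is `-1` exactly on `D`, in terms of the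
number of representations of `g` as a quotient of elements of `D`. -/
lemma corr_sign {G : Type*} [CommGroup G] [Finite G] (D : Set G)
    [DecidablePred (· ∈ D)] (g : G) :
    corr (fun x => if x ∈ D then -1 else 1) (fun x => if x ∈ D then -1 else 1) g =
      Nat.card G - 4 * Nat.card D +
        4 * Nat.card {p : D × D // (p.1 : G) * (p.2 : G)⁻¹ = g} := by
  have := Fintype.ofFinite G
  have e : {p : D × D // (p.1 : G) * (p.2 : G)⁻¹ = g} ≃ {y : G // y ∈ D ∧ y * g ∈ D} :=
    { toFun := fun p => ⟨p.1.2, p.1.2.2, by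
        have h : (p.1.2 : G) * g = p.1.1 := by
          rw [mul_comm]; exact (mul_inv_eq_iff_eq_mul.1 p.2).symm
        rw [h]; exact p.1.1.2⟩
      invFun := fun y => ⟨(⟨y * g, y.2.2⟩, ⟨y, y.2.1⟩), by simp⟩
      left_inv := by
        rintro ⟨⟨x, y⟩, h⟩
        ext
        · simp [← h]
        · rfl
      right_inv := fun y => rfl }
  have h1 : (Nat.card {p : D × D // (p.1 : G) * (p.2 : G)⁻¹ = g} : ℤ) =
      ∑ x, if x ∈ D ∧ x * g ∈ D then 1 else 0 := by
    rw [Nat.card_congr e, Nat.card_eq_fintype_card, Fintype.card_subtype, Finset.sum_boole]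
  have h2 : (Nat.card D : ℤ) = ∑ x, if x ∈ D then 1 else 0 := by
    rw [Nat.card_eq_fintype_card, Fintype.card_subtype, Finset.sum_boole]
  have h3 : (Nat.card D : ℤ) = ∑ x, if x * g ∈ D then 1 else 0 := by
    rw [h2]
    exact (Equiv.sum_comp (Equiv.mulRight g) fun x => if x ∈ D then (1 : ℤ) else 0).symm
  have h4 : (Nat.card G : ℤ) = ∑ x : G, 1 := by simp
  have h5 : (4 : ℤ) * Nat.card D = 2 * Nat.card D + 2 * Nat.card D := by ring
  rw [h5]
  nth_rewrite 2 [h3]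
  rw [h1, h2, h4, corr_eq_sum, Finset.mul_sum, Finset.mul_sum, Finset.mul_sum,
    ← Finset.sum_add_distrib, ← Finset.sum_sub_distrib, ← Finset.sum_add_distrib]
  refine Finset.sum_congr rfl fun x _ => ?_
  by_cases hx : x ∈ D <;> by_cases hy : x * g ∈ D <;> simp [hx, hy]

lemma IsHadamardGroup.hasBent {G : Type*} [CommGroup G] [Finite G] (h : IsHadamardGroup G) :
    HasBent G := by
  classical
  obtain ⟨D, k, l, hk, hl, hkl⟩ := h
  refine ⟨fun x => if x ∈ D then -1 else 1, fun x => ?_, fun y hy => ?_⟩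
  · by_cases hx : x ∈ D <;> simp [hx]
  · rw [corr_sign, hl y hy, hk]
    omega

lemma HasBent.isHadamardGroup {G : Type*} [CommGroup G] [Finite G] [Nontrivial G]
    (h : HasBent G) : IsHadamardGroup G := by
  classical
  obtain ⟨f, hf, hc⟩ := h
  set D : Set G := {x | f x = -1} with hD
  have hfD : f = fun x => if x ∈ D then -1 else 1 := by
    ext x
    rcases hf x with h | h <;> simp [hD, h]
  rw [hfD] at hc
  obtain ⟨g₀, hg₀⟩ := exists_ne (1 : G)
  refine ⟨D, _, Nat.card {p : D × D // (p.1 : G) * (p.2 : G)⁻¹ = g₀}, rfl, fun g hg => ?_, ?_⟩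
  · have h0 := hc g₀ hg₀
    have h1 := hc g hg
    rw [corr_sign] at h0 h1
    omega
  · have h0 := hc g₀ hg₀
    rw [corr_sign] at h0
    omega

/-! ### The ring of integers of the cyclotomic field of 2-power order -/

open Polynomial in
/-- The ring `ℤ[ζ]` for `ζ` a primitive root of unity of order `2 ^ (s + 1)`. -/
abbrev CycRing (s : ℕ) : Type := AdjoinRoot (X ^ 2 ^ s + 1 : ℤ[X])

namespace CycRing

open Polynomial

/-- The distinguished root of unity of `CycRing s`. -/
noncomputable abbrev zeta (s : ℕ) : CycRing s := AdjoinRoot.root _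

variable {s : ℕ}

lemma monic : (X ^ 2 ^ s + 1 : ℤ[X]).Monic := monic_X_pow_add_C (1 : ℤ) (by positivity)

lemma natDegree : (X ^ 2 ^ s + 1 : ℤ[X]).natDegree = 2 ^ s := natDegree_X_pow_add_C (r := (1 : ℤ))

instance : IsDomain (CycRing s) := by
  apply AdjoinRoot.isDomain_of_prime
  have h : (X ^ 2 ^ s + 1 : ℤ[X]) = cyclotomic (2 ^ (s + 1)) ℤ := by
    rw [cyclotomic_prime_pow_eq_geom_sum Nat.prime_two]
    simp [Finset.sum_range_succ, add_comm]
  rw [h]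
  exact (cyclotomic.irreducible (by positivity)).prime

lemma zeta_pow : zeta s ^ 2 ^ s = -1 := by
  have := AdjoinRoot.eval₂_root (X ^ 2 ^ s + 1 : ℤ[X])
  simp only [eval₂_add, eval₂_X_pow, eval₂_one] at this
  exact eq_neg_of_add_eq_zero_left this

lemma zeta_pow_two_mul : zeta s ^ (2 * 2 ^ s) = 1 := by
  rw [mul_comm, pow_mul, zeta_pow]; norm_num

instance : CharZero (CycRing s) := by
  have h : (X ^ 2 ^ s + 1 : ℤ[X]).degree ≠ 0 := by
    rw [degree_eq_natDegree monic.ne_zero, natDegree]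
    exact_mod_cast (by positivity : 2 ^ s ≠ 0)
  refine charZero_of_injective_algebraMap (R := ℤ) (A := CycRing s) ?_
  exact AdjoinRoot.of.injective_of_degree_ne_zero h

lemma isPrimitiveRoot_zeta : IsPrimitiveRoot (zeta s) (2 ^ (s + 1)) := by
  rw [IsPrimitiveRoot.iff_orderOf]
  refine orderOf_eq_prime_pow ?_ ?_
  · rw [zeta_pow]
    norm_num
  · rw [pow_succ, pow_mul, zeta_pow]; norm_num

/-- The ring homomorphism `ζ ↦ 1` to the residue field of the prime above `2`. -/
noncomputable def aug (s : ℕ) : CycRing s →+* ZMod 2 :=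
  AdjoinRoot.lift (Int.castRingHom (ZMod 2)) 1 (by simp; decide)

/-- Complex conjugation, `ζ ↦ ζ⁻¹`. -/
noncomputable def conj (s : ℕ) : CycRing s →+* CycRing s :=
  AdjoinRoot.lift (algebraMap ℤ _) (zeta s ^ (2 * 2 ^ s - 1)) (by
    simp only [eval₂_add, eval₂_X_pow, eval₂_one]
    rw [← pow_mul, mul_comm, pow_mul, zeta_pow, Odd.neg_one_pow, neg_add_cancel]
    have : 0 < 2 ^ s := by positivity
    exact ⟨2 ^ s - 1, by omega⟩)

lemma zeta_mul_conj_zeta : zeta s * conj s (zeta s) = 1 := by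
  have : 0 < 2 ^ s := by positivity
  rw [conj, AdjoinRoot.lift_root, ← pow_succ', Nat.sub_add_cancel (by omega), zeta_pow_two_mul]

lemma aug_conj (x : CycRing s) : aug s (conj s x) = aug s x := by
  have : (aug s).comp (conj s) = aug s := by
    refine AdjoinRoot.ringHom_ext (RingHom.ext_int _ _) ?_
    simp [conj, aug]
  exact congrArg (fun φ : CycRing s →+* ZMod 2 => φ x) this

lemma pow_dvd_two : (1 - zeta s) ^ 2 ^ s ∣ 2 := by
  have h : ∀ k ≤ s, (1 - zeta s) ^ 2 ^ k ∣ 1 - zeta s ^ 2 ^ k := by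
    intro k
    induction k with
    | zero => simp
    | succ k ih =>
      intro hk
      have h1 := ih (by omega)
      -- for `t = ζ ^ 2 ^ k`, the sum `1 + t = 1 - t * ζ ^ 2 ^ s` is one minus a power of `t`
      have h2 : 1 - zeta s ^ 2 ^ k ∣ 1 + zeta s ^ 2 ^ k := by
        have := sub_dvd_pow_sub_pow 1 (zeta s ^ 2 ^ k) (2 ^ (s - k) + 1)
        rwa [one_pow, pow_succ, ← pow_mul, ← pow_add 2, show k + (s - k) = s by omega, zeta_pow,
          neg_one_mul, sub_neg_eq_add] at this
      have h3 : 1 - zeta s ^ 2 ^ (k + 1) = (1 - zeta s ^ 2 ^ k) * (1 + zeta s ^ 2 ^ k) := by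
        ring
      rw [h3, pow_succ, mul_comm (2 ^ k) 2, two_mul, pow_add]
      exact mul_dvd_mul h1 (h1.trans h2)
  have := h s le_rfl
  rwa [zeta_pow, sub_neg_eq_add, one_add_one_eq_two] at this

lemma two_dvd_pow : 2 ∣ (1 - zeta s) ^ 2 ^ s := by
  have h : ∀ k, (2 : CycRing s) ∣ (1 - zeta s) ^ 2 ^ k - (1 + zeta s ^ 2 ^ k) := by
    intro k
    induction k with
    | zero => exact ⟨-zeta s, by ring⟩
    | succ k ih =>
      obtain ⟨c, hc⟩ := ih
      rw [sub_eq_iff_eq_add] at hc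
      refine ⟨2 * c ^ 2 + 2 * c * (1 + zeta s ^ 2 ^ k) + zeta s ^ 2 ^ k, ?_⟩
      rw [pow_succ, pow_mul, hc, pow_mul]
      ring
  have := h s
  rwa [zeta_pow, add_neg_cancel, sub_zero] at this

/-- The kernel of `aug` is generated by `1 - ζ`. -/
lemma one_sub_zeta_dvd {x : CycRing s} (hx : aug s x = 0) : 1 - zeta s ∣ x := by
  obtain ⟨p, rfl⟩ := AdjoinRoot.mk_surjective x
  have h1 : 1 - zeta s ∣ AdjoinRoot.mk _ p - algebraMap ℤ _ (p.eval 1) := by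
    obtain ⟨q, hq⟩ := X_sub_C_dvd_sub_C_eval (a := (1 : ℤ)) (p := p)
    have := congrArg (AdjoinRoot.mk (X ^ 2 ^ s + 1 : ℤ[X])) hq
    rw [map_sub, map_mul, map_sub, AdjoinRoot.mk_X, AdjoinRoot.mk_C, AdjoinRoot.mk_C,
      map_one] at this
    refine ⟨-AdjoinRoot.mk _ q, ?_⟩
    rw [AdjoinRoot.algebraMap_eq, this]
    ring
  have h2 : ((p.eval 1 : ℤ) : ZMod 2) = 0 := by
    rw [← hx, aug, AdjoinRoot.lift_mk, eval₂_at_one, eq_intCast]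
  have h3 : 1 - zeta s ∣ algebraMap ℤ (CycRing s) (p.eval 1) := by
    obtain ⟨c, hc⟩ := (ZMod.intCast_zmod_eq_zero_iff_dvd _ 2).1 h2
    rw [hc, map_mul]
    refine Dvd.dvd.mul_right ?_ _
    refine (dvd_pow_self _ (by positivity : 2 ^ s ≠ 0)).trans ?_
    simpa using pow_dvd_two (s := s)
  simpa using dvd_add h1 h3

lemma one_sub_zeta_ne_zero : 1 - zeta s ≠ 0 := fun h => by
  have := pow_dvd_two (s := s)
  rw [h, zero_pow (by positivity), zero_dvd_iff] at this
  exact two_ne_zero this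

/-- The prime `1 - ζ` is associated to its conjugate, so it divides `x` and `conj x` to the same
power. -/
lemma pow_dvd_of_pow_dvd_mul_conj (N : ℕ) : ∀ x : CycRing s,
    (1 - zeta s) ^ (2 * N) ∣ x * conj s x → (1 - zeta s) ^ N ∣ x := by
  induction N with
  | zero => simp
  | succ N ih =>
    intro x hx
    have h0 : aug s x = 0 := by
      have h1 : 1 - zeta s ∣ x * conj s x := (dvd_pow_self _ (by omega)).trans hx
      have h2 := map_dvd (aug s) h1
      have h3 : aug s (1 - zeta s) = 0 := by simp [aug]
      rw [h3, zero_dvd_iff, map_mul, aug_conj] at h2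
      exact mul_self_eq_zero.1 h2
    obtain ⟨y, rfl⟩ := one_sub_zeta_dvd h0
    have h1 : zeta s * ((1 - zeta s) * y * conj s ((1 - zeta s) * y)) =
        (1 - zeta s) ^ 2 * -(y * conj s y) := by
      rw [map_mul, map_sub, map_one]
      linear_combination (-(1 - zeta s) * y * conj s y) * zeta_mul_conj_zeta (s := s)
    have h2 := hx.mul_left (zeta s)
    rw [h1, show 2 * (N + 1) = 2 + 2 * N by ring, pow_add,
      mul_dvd_mul_iff_left (pow_ne_zero _ one_sub_zeta_ne_zero), dvd_neg] at h2
    rw [pow_succ']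
    exact mul_dvd_mul_left _ (ih y h2)

/-- As `2` is `(1 - ζ) ^ 2 ^ s` up to a unit, an element of `ℤ[ζ]` of squared modulus
`2 ^ (2 * n)` is divisible by `2 ^ n`. -/
lemma two_pow_dvd {n : ℕ} {x : CycRing s} (hx : x * conj s x = 2 ^ (2 * n)) : 2 ^ n ∣ x := by
  have h1 : (1 - zeta s) ^ (2 * (2 ^ s * n)) ∣ x * conj s x := by
    rw [hx, show 2 * (2 ^ s * n) = 2 ^ s * (2 * n) by ring, pow_mul]
    exact pow_dvd_pow_of_dvd pow_dvd_two _
  have h2 := pow_dvd_of_pow_dvd_mul_conj _ _ h1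
  rw [pow_mul] at h2
  exact (pow_dvd_pow_of_dvd two_dvd_pow n).trans h2

/-- The `i`-th coordinate in the basis `1, ζ, …, ζ ^ (2 ^ s - 1)`. -/
noncomputable def coord (i : Fin (2 ^ s)) : CycRing s →ₗ[ℤ] ℤ :=
  (AdjoinRoot.powerBasis' (monic (s := s))).basis.coord (Fin.cast natDegree.symm i)

lemma exists_coord_ne_zero {x : CycRing s} (hx : x ≠ 0) : ∃ i, coord i x ≠ 0 := by
  by_contra! h
  refine hx ((AdjoinRoot.powerBasis' (monic (s := s))).basis.forall_coord_eq_zero_iff.1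
    fun i => ?_)
  exact h (Fin.cast natDegree i)

lemma coord_zeta_pow (i : Fin (2 ^ s)) {j : ℕ} (hj : j < 2 ^ s) :
    coord i (zeta s ^ j) = if (i : ℕ) = j then 1 else 0 := by
  have h := (AdjoinRoot.powerBasis' (monic (s := s))).basis_eq_pow ⟨j, by
    change j < (X ^ 2 ^ s + 1 : ℤ[X]).natDegree
    rwa [natDegree]⟩
  have h2 : zeta s ^ j = (AdjoinRoot.powerBasis' (monic (s := s))).basis ⟨j, by
    change j < (X ^ 2 ^ s + 1 : ℤ[X]).natDegree
    rwa [natDegree]⟩ := h.symm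
  rw [h2, coord, Module.Basis.coord_apply, Module.Basis.repr_self, Finsupp.single_apply]
  simp only [Fin.ext_iff, eq_comm (b := j)]
  rfl

/-- A root of unity contributes to the `i`-th coordinate only if it is `ζ ^ i` or `-ζ ^ i`. -/
lemma abs_coord_le (i : Fin (2 ^ s)) {x : CycRing s} (hx : x ^ 2 ^ (s + 1) = 1) :
    |coord i x| ≤ if x ^ 2 = (zeta s ^ (i : ℕ)) ^ 2 then 1 else 0 := by
  obtain ⟨j, hj, rfl⟩ := isPrimitiveRoot_zeta.eq_pow_of_pow_eq_one hx
  rcases lt_or_ge j (2 ^ s) with h | h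
  · rw [coord_zeta_pow i h]
    by_cases hij : (i : ℕ) = j
    · simp [hij]
    · simp only [hij, if_false, abs_zero]
      split_ifs <;> norm_num
  · obtain ⟨l, rfl⟩ := Nat.exists_eq_add_of_le h
    have hl : l < 2 ^ s := by rw [pow_succ] at hj; omega
    rw [pow_add, zeta_pow, neg_one_mul, map_neg, abs_neg, neg_sq, coord_zeta_pow i hl]
    by_cases hij : (i : ℕ) = l
    · simp [hij]
    · simp only [hij, if_false, abs_zero]
      split_ifs <;> norm_num

end CycRing

/-! ### The exponent bound -/

/-- Turyn's exponent bound. Take a character `χ` of order `2 ^ (s + 1)`, with values in `ℤ[ζ]`. The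
character sum `S` of a bent function satisfies `S * conj S = 2 ^ (2 * d + 2)`, so `2 ^ (d + 1)`
divides all its coordinates. A non-zero coordinate is at most the order of the kernel of `χ ^ 2`,
namely `|G| / 2 ^ s`; hence `d + 1 ≤ 2 * d + 2 - s`. -/
lemma HasBent.exponent_le {G : Type*} [CommGroup G] [Finite G] {d s : ℕ}
    (hG : Nat.card G = 2 ^ (2 * d + 2)) (hE : Monoid.exponent G = 2 ^ (s + 1)) (hb : HasBent G) :
    s ≤ d + 1 := by
  classical
  have := Fintype.ofFinite G
  obtain ⟨f, hf, hc⟩ := hb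
  -- a character `χ` of `G` taking a primitive `2 ^ (s + 1)`-th root of unity as a value
  obtain ⟨g, hg⟩ := Monoid.exists_orderOf_eq_exponent (Monoid.ExponentExists.of_finite (G := G))
  rw [hE] at hg
  have hg1 : g ^ 2 ^ s ≠ 1 := fun h => by
    have h1 := Nat.le_of_dvd (by positivity) (hg ▸ orderOf_dvd_of_pow_eq_one h)
    have h2 : 2 ^ s < 2 ^ (s + 1) := Nat.pow_lt_pow_right (by norm_num) (by omega)
    omega
  have : NeZero (2 ^ (s + 1)) := ⟨by positivity⟩
  have : HasEnoughRootsOfUnity (CycRing s) (Monoid.exponent G) := by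
    rw [hE]
    exact ⟨⟨_, CycRing.isPrimitiveRoot_zeta⟩, inferInstance⟩
  obtain ⟨χ, hχ⟩ := CommGroup.exists_apply_ne_one_of_hasEnoughRootsOfUnity G (CycRing s) hg1
  have hroot : ∀ x, (χ x : CycRing s) ^ 2 ^ (s + 1) = 1 := fun x => by
    rw [← Units.val_pow_eq_pow_val, ← map_pow, ← hE, Monoid.pow_exponent_eq_one, map_one,
      Units.val_one]
  have hconj : ∀ x, CycRing.conj s (χ x) = χ x⁻¹ := fun x => by
    have h1 : (χ x : CycRing s) * CycRing.conj s (χ x) = 1 := by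
      obtain ⟨j, _, hj⟩ := CycRing.isPrimitiveRoot_zeta.eq_pow_of_pow_eq_one (hroot x)
      rw [← hj, map_pow, ← mul_pow, CycRing.zeta_mul_conj_zeta, one_pow]
    have h2 : (χ x : CycRing s) * χ x⁻¹ = 1 := by
      rw [← Units.val_mul, ← map_mul, mul_inv_cancel, map_one, Units.val_one]
    exact mul_left_cancel₀ (χ x).ne_zero (h1.trans h2.symm)
  set S : CycRing s := ∑ x, (f x : CycRing s) * χ x with hS
  have hSS : S * CycRing.conj s S = 2 ^ (2 * (d + 1)) := by
    have h1 : CycRing.conj s S = ∑ x, (f x : CycRing s) * χ x⁻¹ := by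
      simp [hS, hconj]
    have h2 : ∀ y, ∑ x, (f y : CycRing s) * χ y * (f x * χ x⁻¹) =
        ∑ z, ((f y * f (y * z) : ℤ) : CycRing s) * χ z⁻¹ := fun y => by
      rw [← Equiv.sum_comp (Equiv.mulLeft y)]
      refine Finset.sum_congr rfl fun z _ => ?_
      have h3 : (χ z⁻¹ : CycRing s) = χ y * χ (y * z)⁻¹ := by
        rw [← Units.val_mul, ← map_mul]; congr 2; simp
      rw [h3, Equiv.coe_mulLeft]
      push_cast
      ring
    rw [h1, hS, Finset.sum_mul_sum]
    simp_rw [h2]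
    rw [Finset.sum_comm, Finset.sum_eq_single 1]
    · rw [← Finset.sum_mul, ← Int.cast_sum, ← corr_eq_sum, corr_self_one hf, hG]
      simp [mul_add]
    · intro z _ hz
      rw [← Finset.sum_mul, ← Int.cast_sum, ← corr_eq_sum, hc z hz]
      simp
    · simp
  have hS0 : S ≠ 0 := fun h => by
    rw [h, zero_mul] at hSS
    exact pow_ne_zero _ two_ne_zero hSS.symm
  obtain ⟨i, hi⟩ := CycRing.exists_coord_ne_zero hS0
  have hdvd : (2 : ℤ) ^ (d + 1) ∣ CycRing.coord i S := by
    obtain ⟨w, hw⟩ := CycRing.two_pow_dvd hSS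
    refine ⟨CycRing.coord i w, ?_⟩
    have : S = ((2 : ℤ) ^ (d + 1)) • w := by rw [hw, zsmul_eq_mul]; push_cast; rfl
    rw [this, map_smul, smul_eq_mul]
  have hlow : (2 : ℤ) ^ (d + 1) ≤ |CycRing.coord i S| :=
    Int.le_of_dvd (abs_pos.2 hi) ((dvd_abs _ _).2 hdvd)
  -- only the arguments in one coset of the kernel of `χ ^ 2` contribute to the coordinate
  set P : Finset G := {x | (χ x : CycRing s) ^ 2 = (CycRing.zeta s ^ (i : ℕ)) ^ 2} with hP
  have hup : |CycRing.coord i S| ≤ P.card := by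
    have h1 : CycRing.coord i S = ∑ x, f x * CycRing.coord i (χ x) := by
      rw [hS, map_sum]
      refine Finset.sum_congr rfl fun x _ => ?_
      rw [← zsmul_eq_mul, map_smul, smul_eq_mul]
    rw [h1, hP, Finset.card_filter]
    push_cast
    refine (Finset.abs_sum_le_sum_abs _ _).trans (Finset.sum_le_sum fun x _ => ?_)
    have h2 : |f x| = 1 := by rcases hf x with h | h <;> simp [h]
    rw [abs_mul, h2, one_mul]
    exact CycRing.abs_coord_le i (hroot x)
  set ψ : G →* (CycRing s)ˣ := (powMonoidHom 2).comp χ with hψ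
  have hPker : P.card ≤ Nat.card ψ.ker := by
    rcases P.eq_empty_or_nonempty with h | ⟨x₁, hx₁⟩
    · simp [h]
    · have hsub : Set.image (fun x => x * x₁⁻¹) (P : Set G) ⊆ (ψ.ker : Set G) := by
        rintro _ ⟨x, hx, rfl⟩
        have h1 : (χ x : CycRing s) ^ 2 = (χ x₁ : CycRing s) ^ 2 :=
          (Finset.mem_filter.1 hx).2.trans (Finset.mem_filter.1 hx₁).2.symm
        have h2 : ψ x = ψ x₁ := Units.ext h1
        rw [SetLike.mem_coe, MonoidHom.mem_ker, map_mul, map_inv, h2, mul_inv_cancel]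
      have h3 := Set.ncard_le_ncard hsub
      rw [Set.ncard_image_of_injective _ (mul_left_injective x₁⁻¹), Set.ncard_coe_finset] at h3
      exact h3
  have hker : Nat.card ψ.ker * 2 ^ s ≤ 2 ^ (2 * d + 2) := by
    rw [← hG, ← ψ.ker.card_mul_index, Subgroup.index_ker]
    refine Nat.mul_le_mul_left _ ?_
    have horder : orderOf (χ g) = 2 ^ (s + 1) := by
      have : Fact (Nat.Prime 2) := ⟨Nat.prime_two⟩
      refine orderOf_eq_prime_pow ?_ (Units.ext (hroot g))
      rwa [← map_pow]
    have hψg : orderOf (ψ g) = 2 ^ s := by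
      have h1 : ψ g = χ g ^ 2 := rfl
      rw [h1, orderOf_pow_of_dvd two_ne_zero (horder ▸ dvd_pow_self 2 (by omega)), horder,
        pow_succ, Nat.mul_div_cancel _ two_pos]
    have hfin : Finite ψ.range := inferInstance
    refine hψg.symm.trans_le ?_
    rw [← Nat.card_zpowers]
    exact Subgroup.card_le_of_le (Subgroup.zpowers_le.2 ⟨g, rfl⟩)
  have h1 : 2 ^ (d + 1) * 2 ^ s ≤ 2 ^ (2 * d + 2) := by
    have : 2 ^ (d + 1) ≤ P.card := by exact_mod_cast hlow.trans hup
    exact (Nat.mul_le_mul_right _ (this.trans hPker)).trans hker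
  rw [← pow_add] at h1
  have := (Nat.pow_le_pow_iff_right (by norm_num)).1 h1
  omega

theorem kraemer {G : Type*} [CommGroup G] [Finite G] (d : ℕ)
    (hG : Nat.card G = 2 ^ (2 * d + 2)) :
    IsHadamardGroup G ↔ Monoid.exponent G ≤ 2 ^ (d + 2) := by
  obtain ⟨e, -, he⟩ := (Nat.dvd_prime_pow Nat.prime_two).1 (hG ▸ Group.exponent_dvd_nat_card (G := G))
  have hnt : Nontrivial G := by
    rw [← Finite.one_lt_card_iff_nontrivial, hG]
    exact Nat.one_lt_two_pow (by omega)
  rw [he, Nat.pow_le_pow_iff_right (by norm_num)]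
  constructor
  · intro h
    rcases e with _ | s
    · omega
    · have := h.hasBent.exponent_le hG he
      omega
  · intro h
    refine (hasBent (d + 1) G hG fun x => ?_).isHadamardGroup
    exact orderOf_dvd_iff_pow_eq_one.1
      ((Monoid.order_dvd_exponent x).trans (he ▸ pow_dvd_pow 2 h))
end

section
/- Let d and r be integers with d ≥ 1 and 2 ≤ r ≤ d+1. Let G be a group of order 2^{2d+2} containing a normal abelian subgroup K of index 2^r such that K has rank r and exponent at most 2^{d−r+2}. Then G contains a Hadamard difference set. -/
/-! ### Rainbow transversals -/

/-- `M` is a partial rainbow transversal of the array `f`, whose entry in row `i` and column `v`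
is the symbol `f i v`: a set of cells with rows in `R` and columns in `O`, no two of which share a
row, a column or a symbol. -/
structure IsRainbow {ι V S : Type*} (f : ι → V → S) (R : Finset ι) (O : Finset V)
    (M : Finset (ι × V)) : Prop where
  row_mem : ∀ e ∈ M, e.1 ∈ R
  col_mem : ∀ e ∈ M, e.2 ∈ O
  row_inj : ∀ e ∈ M, ∀ e' ∈ M, e.1 = e'.1 → e = e'
  col_inj : ∀ e ∈ M, ∀ e' ∈ M, e.2 = e'.2 → e = e'
  sym_inj : ∀ e ∈ M, ∀ e' ∈ M, f e.1 e.2 = f e'.1 e'.2 → e = e'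

open Classical in
/-- Alternating paths. Let `M` be a maximum partial rainbow transversal that misses a column of `O`,
and suppose there are at least `2 * O.card - 1` rows, each without repeated symbols. Then for each
`i ≤ M.card + 1` there is a set `T` of `i` cells of `M` such that any column left uncovered by
`M \ T` can be freed: some partial rainbow transversal `N` avoids it, uses the symbols of `M`,
contains `M \ T`, and takes its other rows from those of `M` and from at most `i` further
rows `U`. For `i = M.card + 1` this is absurd.

In the step from `i` to `i + 1`, a fresh row `u` has more free columns than there are symbols
on `T`, hence a free column `c` with `f u c` not on `T`; maximality of `M` forces `f u c` to be the
symbol of some `e ∈ M \ T`, which joins `T`, since `(u, c)` can replace `e`. -/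
lemma exists_alternating {ι V S : Type*} (f : ι → V → S) (hf : ∀ i, Function.Injective (f i))
    (R : Finset ι) (O : Finset V) (hR : 2 * O.card ≤ R.card + 1)
    (M : Finset (ι × V)) (hM : IsRainbow f R O M) (hlt : M.card < O.card)
    (hmax : ∀ N, IsRainbow f R O N → N.card ≤ M.card) (i : ℕ) (hi : i ≤ M.card + 1) :
    ∃ T ⊆ M, T.card = i ∧ ∃ U : Finset ι, U.card ≤ i ∧
      ∀ a ∈ O, a ∉ (M \ T).image Prod.snd → ∃ N, IsRainbow f R O N ∧
        N.image (fun e => f e.1 e.2) = M.image (fun e => f e.1 e.2) ∧ M \ T ⊆ N ∧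
        a ∉ N.image Prod.snd ∧ N.image Prod.fst ⊆ M.image Prod.fst ∪ U := by
  induction i with
  | zero =>
    refine ⟨∅, by simp, by simp, ∅, by simp, fun a _ ha => ⟨M, hM, rfl, by simp, ?_, by simp⟩⟩
    simpa using ha
  | succ i ih =>
    obtain ⟨T, hTM, hTc, U, hU, hN⟩ := ih (by omega)
    obtain ⟨u, huR, hu⟩ : ∃ u ∈ R, u ∉ M.image Prod.fst ∪ U := by
      by_contra! h
      have h1 := Finset.card_le_card (show R ⊆ M.image Prod.fst ∪ U from h)
      have h2 := Finset.card_union_le (M.image Prod.fst) U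
      have h3 : (M.image Prod.fst).card ≤ M.card := Finset.card_image_le
      omega
    obtain ⟨c, hcO, hcM, hcT⟩ : ∃ c ∈ O, c ∉ (M \ T).image Prod.snd ∧
        f u c ∉ T.image (fun e => f e.1 e.2) := by
      by_contra! h
      have h1 : ((O \ (M \ T).image Prod.snd).image (f u)) ⊆ T.image (fun e => f e.1 e.2) := by
        intro s hs
        obtain ⟨c, hc, rfl⟩ := Finset.mem_image.1 hs
        rw [Finset.mem_sdiff] at hc
        exact h c hc.1 hc.2
      have h2 := Finset.card_le_card h1
      rw [Finset.card_image_of_injective _ (hf u)] at h2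
      have h3 : (T.image (fun e => f e.1 e.2)).card ≤ T.card := Finset.card_image_le
      have h4 : ((M \ T).image Prod.snd).card ≤ (M \ T).card := Finset.card_image_le
      have h5 := Finset.card_sdiff_add_card_eq_card hTM
      have h6 := Finset.le_card_sdiff ((M \ T).image Prod.snd) O
      omega
    obtain ⟨N, hNr, hNs, hNM, hNc, hNf⟩ := hN c hcO hcM
    have huN : ∀ e ∈ N, e.1 ≠ u := fun e he h =>
      hu (hNf (h ▸ Finset.mem_image_of_mem _ he))
    have hcN : ∀ e ∈ N, e.2 ≠ c := fun e he h => hNc (h ▸ Finset.mem_image_of_mem _ he)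
    -- adding `(u, c)` to a part of `N` that avoids the symbol `f u c`
    have hadd : ∀ N' ⊆ N, (∀ e ∈ N', f e.1 e.2 ≠ f u c) → IsRainbow f R O (insert (u, c) N') := by
      intro N' hN' hs
      constructor <;> simp only [Finset.mem_insert, forall_eq_or_imp]
      · exact ⟨huR, fun e he => hNr.row_mem e (hN' he)⟩
      · exact ⟨hcO, fun e he => hNr.col_mem e (hN' he)⟩
      · exact ⟨⟨fun _ => trivial, fun e he h => absurd h.symm (huN e (hN' he))⟩,
          fun e he => ⟨fun h => absurd h (huN e (hN' he)),
            fun e' he' => hNr.row_inj e (hN' he) e' (hN' he')⟩⟩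
      · exact ⟨⟨fun _ => trivial, fun e he h => absurd h.symm (hcN e (hN' he))⟩,
          fun e he => ⟨fun h => absurd h (hcN e (hN' he)),
            fun e' he' => hNr.col_inj e (hN' he) e' (hN' he')⟩⟩
      · exact ⟨⟨fun _ => trivial, fun e he h => absurd h.symm (hs e he)⟩,
          fun e he => ⟨fun h => absurd h (hs e he),
            fun e' he' => hNr.sym_inj e (hN' he) e' (hN' he')⟩⟩
    have hcard : N.card = M.card := by
      rw [← Finset.card_image_of_injOn (s := N) (f := fun e => f e.1 e.2)
        (fun e he e' he' => hNr.sym_inj e he e' he'), hNs,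
        Finset.card_image_of_injOn (fun e he e' he' => hM.sym_inj e he e' he')]
    have hmem : f u c ∈ M.image (fun e => f e.1 e.2) := by
      by_contra hn
      have h1 := hmax _ (hadd N subset_rfl (fun e he h => hn (by
        rw [← hNs, ← h]; exact Finset.mem_image_of_mem (fun e => f e.1 e.2) he)))
      rw [Finset.card_insert_of_notMem (fun h => huN _ h rfl)] at h1
      omega
    obtain ⟨e, heM, he⟩ := Finset.mem_image.1 hmem
    have heT : e ∉ T := fun h => hcT (he ▸ Finset.mem_image_of_mem (fun e => f e.1 e.2) h)
    have heN : e ∈ N := hNM (Finset.mem_sdiff.2 ⟨heM, heT⟩)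
    refine ⟨insert e T, Finset.insert_subset heM hTM, by
      rw [Finset.card_insert_of_notMem heT, hTc], insert u U,
      (Finset.card_insert_le _ _).trans (by omega), fun a haO ha => ?_⟩
    by_cases hae : a = e.2
    · refine ⟨insert (u, c) (N.erase e), hadd _ (Finset.erase_subset _ _) ?_, ?_, ?_, ?_, ?_⟩
      · intro e' he' h
        rw [Finset.mem_erase] at he'
        exact he'.1 (hNr.sym_inj e' he'.2 e heN (h.trans he.symm))
      · rw [Finset.image_insert, ← hNs]
        conv_rhs => rw [← Finset.insert_erase heN, Finset.image_insert]
        simp only [he]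
      · intro e' he'
        simp only [Finset.mem_sdiff, Finset.mem_insert, not_or] at he'
        exact Finset.mem_insert_of_mem (Finset.mem_erase.2
          ⟨he'.2.1, hNM (Finset.mem_sdiff.2 ⟨he'.1, he'.2.2⟩)⟩)
      · rw [Finset.image_insert, Finset.mem_insert, not_or, hae]
        refine ⟨hcN e heN, fun h => ?_⟩
        obtain ⟨e', he', h'⟩ := Finset.mem_image.1 h
        rw [Finset.mem_erase] at he'
        exact he'.1 (hNr.col_inj e' he'.2 e heN h')
      · rw [Finset.image_insert]
        refine Finset.insert_subset (by simp) ?_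
        refine ((Finset.image_subset_image (Finset.erase_subset _ _)).trans hNf).trans ?_
        exact Finset.union_subset_union_right (Finset.subset_insert _ _)
    · obtain ⟨N', h1, h2, h3, h4, h5⟩ := hN a haO (fun h => by
        obtain ⟨e', he', h'⟩ := Finset.mem_image.1 h
        rw [Finset.mem_sdiff] at he'
        refine ha (Finset.mem_image.2 ⟨e', Finset.mem_sdiff.2 ⟨he'.1, ?_⟩, h'⟩)
        rw [Finset.mem_insert, not_or]
        exact ⟨fun h => hae (h ▸ h'.symm), he'.2⟩)
      exact ⟨N', h1, h2, (Finset.sdiff_subset_sdiff subset_rfl (Finset.subset_insert _ _)).trans h3,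
        h4, h5.trans (Finset.union_subset_union_right (Finset.subset_insert _ _))⟩

open Classical in
/-- Drisko's theorem: an array with `n` columns `O` and at least `2 * n - 1` rows `R`, none of which
repeats a symbol, has a full rainbow transversal; `θ` sends each column to the row of its cell. -/
lemma drisko {ι V S : Type*} (f : ι → V → S) (hf : ∀ i, Function.Injective (f i))
    (R : Finset ι) (O : Finset V) (hR : 2 * O.card ≤ R.card + 1) (hO : O.Nonempty) :
    ∃ θ : V → ι, (∀ v ∈ O, θ v ∈ R) ∧ Set.InjOn θ O ∧ Set.InjOn (fun v => f (θ v) v) O := by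
  obtain ⟨M, hM', hmax'⟩ := Finset.exists_max_image
    ((R ×ˢ O).powerset.filter (IsRainbow f R O)) Finset.card
    ⟨∅, by simpa using (by constructor <;> simp : IsRainbow f R O ∅)⟩
  have hM : IsRainbow f R O M := (Finset.mem_filter.1 hM').2
  have hmax : ∀ N, IsRainbow f R O N → N.card ≤ M.card := fun N hN =>
    hmax' N (Finset.mem_filter.2 ⟨Finset.mem_powerset.2 fun e he =>
      Finset.mem_product.2 ⟨hN.row_mem e he, hN.col_mem e he⟩, hN⟩)
  have hge : O.card ≤ M.card := by
    by_contra! hlt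
    obtain ⟨T, hT, hTc, -⟩ := exists_alternating f hf R O hR M hM hlt hmax (M.card + 1) le_rfl
    have := Finset.card_le_card hT
    omega
  have himg : M.image Prod.snd = O := Finset.eq_of_subset_of_card_le
    (fun v hv => by obtain ⟨e, he, rfl⟩ := Finset.mem_image.1 hv; exact hM.col_mem e he)
    (by rwa [Finset.card_image_of_injOn (fun e he e' he' => hM.col_inj e he e' he')])
  have hex : ∀ v ∈ O, ∃ i, (i, v) ∈ M := fun v hv => by
    rw [← himg] at hv
    obtain ⟨e, he, rfl⟩ := Finset.mem_image.1 hv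
    exact ⟨e.1, he⟩
  obtain ⟨v₀, hv₀⟩ := hO
  obtain ⟨i₀, -⟩ := hex v₀ hv₀
  have hex' : ∀ v, ∃ i, v ∈ O → (i, v) ∈ M := fun v => by
    by_cases hv : v ∈ O
    · obtain ⟨i, hi⟩ := hex v hv; exact ⟨i, fun _ => hi⟩
    · exact ⟨i₀, fun h => absurd h hv⟩
  choose θ hθ using hex'
  refine ⟨θ, fun v hv => hM.row_mem _ (hθ v hv), fun v hv w hw h => ?_, fun v hv w hw h => ?_⟩
  · exact congrArg Prod.snd (hM.row_inj _ (hθ v hv) _ (hθ w hw) h)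
  · exact congrArg Prod.snd (hM.sym_inj _ (hθ v hv) _ (hθ w hw) h)

/-! ### Permutations from actions of `2`-groups -/

open Classical in
/-- Greedy step of `exists_transversal`: the orbits in the invariant set `S` are treated in order of
decreasing size, and `R` is the set of indices not used yet. Orbit sizes are powers of `2`, so
`S.card` stays divisible by the size `2 ^ n` of the largest orbit `O` left. If `O` is nontrivial it
misses the fixed point `x₀`, whence `R.card = S.card ≥ 2 * 2 ^ n` and `drisko` applies to `O`; a
trivial orbit needs only one index. -/
lemma exists_transversal_aux {G V ι : Type*} [Group G] [MulAction G V] [Finite G] [Fintype V]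
    (x₀ : V) (hx₀ : ∀ g : G, g • x₀ = x₀)
    (f : ι → G) (s : ℕ) :
    ∀ (S : Finset V) (R : Finset ι) (j : ℕ), S.card = s → R.card = s →
      (∀ g : G, ∀ v ∈ S, g • v ∈ S) → 2 ^ j ∣ S.card →
      (∀ v ∈ S, Nat.card (MulAction.orbit G v) ∣ 2 ^ j) → (x₀ ∈ S ∨ j = 0) → S.Nonempty →
      ∃ θ : V → ι, (∀ v ∈ S, θ v ∈ R) ∧ Set.InjOn θ S ∧ Set.InjOn (fun v => f (θ v) • v) S := by
  induction s using Nat.strong_induction_on with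
  | _ s ih =>
    intro S R j hS hR hinv hdvd horb hx hne
    obtain ⟨v, hvS, hvmax⟩ := S.exists_max_image (fun v => Nat.card (MulAction.orbit G v)) hne
    obtain ⟨n, -, hn⟩ := (Nat.dvd_prime_pow Nat.prime_two).1 (horb v hvS)
    set O : Finset V := (MulAction.orbit G v).toFinset with hO
    have hOc : O.card = 2 ^ n := by
      rw [← hn, hO, Set.toFinset_card, Nat.card_eq_fintype_card]
    have hOS : O ⊆ S := by
      intro w hw
      obtain ⟨g, rfl⟩ := Set.mem_toFinset.1 hw
      exact hinv g v hvS
    have hnS : 2 ^ n ∣ S.card := (hn ▸ horb v hvS).trans hdvd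
    have hmem : ∀ g : G, ∀ w, w ∈ O → g • w ∈ O := by
      intro g w hw
      obtain ⟨h, rfl⟩ := Set.mem_toFinset.1 hw
      exact Set.mem_toFinset.2 ⟨g * h, mul_smul g h v⟩
    -- a nontrivial orbit cannot exhaust `S`, since it misses the fixed point `x₀`
    have hx₀O : n ≠ 0 → x₀ ∈ S ∧ x₀ ∉ O := by
      intro hn0
      refine ⟨hx.resolve_right ?_, fun h => ?_⟩
      · rintro rfl
        have := horb v hvS
        rw [hn, pow_zero, Nat.dvd_one] at this
        exact hn0 (by simpa using this)
      · obtain ⟨g, hg⟩ := Set.mem_toFinset.1 h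
        have hv : v = x₀ := by
          have : v = g⁻¹ • x₀ := by rw [← hg]; simp
          rw [this, hx₀]
        have : O.card ≤ 1 := Finset.card_le_one.2 (by
          have : ∀ w ∈ O, w = x₀ := by
            intro w hw
            obtain ⟨g, rfl⟩ := Set.mem_toFinset.1 hw
            change g • v = x₀
            rw [hv, hx₀]
          intro a ha b hb
          rw [this a ha, this b hb])
        rw [hOc] at this
        have := Nat.one_lt_two_pow hn0
        omega
    have hbig : 2 * O.card ≤ R.card + 1 := by
      rw [hR, ← hS, hOc]
      by_cases hn0 : n = 0
      · subst hn0
        have := hne.card_pos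
        omega
      · obtain ⟨h1, h2⟩ := hx₀O hn0
        have hlt : O.card < S.card := Finset.card_lt_card ⟨hOS, fun h => h2 (h h1)⟩
        rw [hOc] at hlt
        obtain ⟨q, hq⟩ := hnS
        rw [hq] at hlt ⊢
        have : 2 ≤ q := by
          by_contra! h
          interval_cases q <;> omega
        nlinarith [Nat.two_pow_pos n]
    have hOne : O.Nonempty := ⟨v, Set.mem_toFinset.2 (MulAction.mem_orbit_self v)⟩
    obtain ⟨θ₁, h1R, h1i, h1s⟩ := drisko (fun i (v : V) => f i • v)
      (fun i => MulAction.injective (f i)) R O hbig hOne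
    by_cases hSO : S = O
    · exact ⟨θ₁, hSO ▸ h1R, hSO ▸ h1i, hSO ▸ h1s⟩
    have hne' : (S \ O).Nonempty := by
      rw [Finset.sdiff_nonempty]
      exact fun h => hSO (Finset.Subset.antisymm h hOS)
    have hc1 := Finset.card_sdiff_of_subset hOS
    have hc2 : (R \ O.image θ₁).card = R.card - O.card := by
      rw [Finset.card_sdiff_of_subset, Finset.card_image_of_injOn h1i]
      intro i hi
      obtain ⟨w, hw, rfl⟩ := Finset.mem_image.1 hi
      exact h1R w hw
    have hOpos := hOne.card_pos
    have hOle := Finset.card_le_card hOS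
    obtain ⟨θ₂, h2R, h2i, h2s⟩ := ih (s - O.card) (by omega) (S \ O) (R \ O.image θ₁) n
      (by omega) (by omega) (by
        intro g w hw
        rw [Finset.mem_sdiff] at hw ⊢
        refine ⟨hinv g w hw.1, fun h => hw.2 ?_⟩
        simpa using hmem g⁻¹ _ h)
      (by rw [hc1, hOc]; exact Nat.dvd_sub hnS dvd_rfl)
      (by
        intro w hw
        rw [Finset.mem_sdiff] at hw
        obtain ⟨b, -, hb⟩ := (Nat.dvd_prime_pow Nat.prime_two).1 (horb w hw.1)
        have := hvmax w hw.1
        simp only [hn, hb] at this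
        rw [hb]
        exact pow_dvd_pow 2 ((Nat.pow_le_pow_iff_right (by norm_num)).1 this))
      (by
        by_cases hn0 : n = 0
        · exact Or.inr hn0
        · exact Or.inl (Finset.mem_sdiff.2 (hx₀O hn0)))
      hne'
    have hsplit : ∀ w ∈ S, w ∉ O → w ∈ S \ O := fun w h h' => Finset.mem_sdiff.2 ⟨h, h'⟩
    refine ⟨fun w => if w ∈ O then θ₁ w else θ₂ w, ?_, ?_, ?_⟩
    · intro w hw
      by_cases h : w ∈ O
      · simpa [h] using h1R w h
      · simpa [h] using (Finset.mem_sdiff.1 (h2R w (hsplit w hw h))).1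
    · have key : ∀ a ∈ O, ∀ b ∈ S \ O, θ₁ a ≠ θ₂ b := fun a ha b hb h =>
        (Finset.mem_sdiff.1 (h2R b hb)).2 (h ▸ Finset.mem_image_of_mem _ ha)
      intro a ha b hb hab
      by_cases h : a ∈ O <;> by_cases h' : b ∈ O <;> simp only [h, h', if_true, if_false] at hab
      · exact h1i h h' hab
      · exact absurd hab (key a h b (hsplit b hb h'))
      · exact absurd hab.symm (key b h' a (hsplit a ha h))
      · exact h2i (hsplit a ha h) (hsplit b hb h') hab
    · have key : ∀ g h : G, ∀ a ∈ O, ∀ b ∉ O, g • a ≠ h • b := fun g h a ha b hb hab =>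
        hb (by
          have := hmem h⁻¹ _ (hmem g a ha)
          rwa [hab, inv_smul_smul] at this)
      intro a ha b hb hab
      by_cases h : a ∈ O <;> by_cases h' : b ∈ O <;> simp only [h, h', if_true, if_false] at hab
      · exact h1s h h' hab
      · exact absurd hab (key _ _ a h b h')
      · exact absurd hab.symm (key _ _ b h' a h)
      · exact h2s (hsplit a ha h) (hsplit b hb h') hab

/-- Given a `2`-group acting on `V` with a fixed point, and group elements `f i` indexed by a set of
the same cardinality `2 ^ r` as `V`, the indices can be matched with the points of `V` so that
moving each point by its group element permutes `V`. -/
lemma exists_transversal {G V ι : Type*} [Group G] [MulAction G V] [Finite G] [Finite V]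
    [Finite ι] {k r : ℕ} (hG : Nat.card G = 2 ^ k) (hV : Nat.card V = 2 ^ r)
    (hι : Nat.card ι = 2 ^ r) (x₀ : V) (hx₀ : ∀ g : G, g • x₀ = x₀) (f : ι → G) :
    ∃ θ : V → ι, Function.Bijective θ ∧ Function.Bijective (fun v => f (θ v) • v) := by
  have := Fintype.ofFinite V
  have := Fintype.ofFinite ι
  have hcV : (Finset.univ : Finset V).card = 2 ^ r := by
    rw [Finset.card_univ, ← Nat.card_eq_fintype_card, hV]
  obtain ⟨θ, -, h1, h2⟩ := exists_transversal_aux x₀ hx₀ f (2 ^ r) Finset.univ Finset.univ r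
    hcV (by rw [Finset.card_univ, ← Nat.card_eq_fintype_card, hι]) (by simp) (by rw [hcV])
    (by
      intro v _
      have h : Nat.card (MulAction.orbit G v) ∣ 2 ^ k := by
        rw [← hG, ← Nat.card_congr (MulAction.orbitProdStabilizerEquivGroup G v).symm.symm,
          Nat.card_prod]
        exact dvd_mul_right _ _
      obtain ⟨b, -, hb⟩ := (Nat.dvd_prime_pow Nat.prime_two).1 h
      have hle : Nat.card (MulAction.orbit G v) ≤ Nat.card V :=
        Nat.card_le_card_of_injective _ Subtype.val_injective
      rw [hb, hV] at hle
      rw [hb]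
      exact pow_dvd_pow 2 ((Nat.pow_le_pow_iff_right (by norm_num)).1 hle))
    (Or.inl (Finset.mem_univ _)) ⟨x₀, Finset.mem_univ _⟩
  rw [Finset.coe_univ, Set.injOn_univ] at h1 h2
  refine ⟨θ, ?_, Finite.injective_iff_bijective.1 h2⟩
  exact (Nat.bijective_iff_injective_and_card θ).2 ⟨h1, by rw [hV, hι]⟩

/-! ### Reduction in abelian `2`-groups -/

/-- `χ` restricts to a homomorphism to `{1, -1}` on the elementary abelian subgroup
`{e | e ^ 2 = 1}` of `K`. The values of `χ` elsewhere are irrelevant. -/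
structure IsSignOn {K : Type*} [CommGroup K] (χ : K → ℤ) : Prop where
  eq_or : ∀ e, e ^ 2 = 1 → χ e = 1 ∨ χ e = -1
  map_mul : ∀ a b, a ^ 2 = 1 → b ^ 2 = 1 → χ (a * b) = χ a * χ b

section structureLemma

variable {K : Type*} [CommGroup K]

lemma IsSignOn.map_one {χ : K → ℤ} (hχ : IsSignOn χ) : χ 1 = 1 := by
  have h := hχ.map_mul 1 1 (by simp) (by simp)
  rw [mul_one] at h
  rcases hχ.eq_or 1 (by simp) with h1 | h1 <;> simp_all

/-- Order formula for the squaring map from `K ^ (2 ^ j)` onto `K ^ (2 ^ (j + 1))`. -/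
lemma card_pow_range_succ (j : ℕ) :
    Nat.card ((powMonoidHom 2 : K →* K).ker ⊓ (powMonoidHom (2 ^ j) : K →* K).range : Subgroup K) *
      Nat.card (powMonoidHom (2 ^ (j + 1)) : K →* K).range =
      Nat.card (powMonoidHom (2 ^ j) : K →* K).range := by
  have h : ((powMonoidHom (2 ^ j) : K →* K).range).map (powMonoidHom 2) =
      (powMonoidHom (2 ^ (j + 1)) : K →* K).range := by
    rw [MonoidHom.map_range]
    congr 1
    ext x
    simp [pow_succ, pow_mul]
  rw [← h, ← Subgroup.relIndex_ker, ← Subgroup.inf_relIndex_right, ← Subgroup.relIndex_bot_left,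
    Subgroup.relIndex_mul_relIndex _ _ _ bot_le inf_le_right, Subgroup.relIndex_bot_left]

lemma pow_range_antitone {i j : ℕ} (h : i ≤ j) :
    (powMonoidHom (2 ^ j) : K →* K).range ≤ (powMonoidHom (2 ^ i) : K →* K).range := by
  rintro _ ⟨x, rfl⟩
  refine ⟨x ^ 2 ^ (j - i), ?_⟩
  simp only [powMonoidHom_apply]
  rw [← pow_mul, ← pow_add, Nat.sub_add_cancel h]

/-- The group `I = K ^ (2 ^ (m + 1))` consists of involutions and lies in each `K ^ (2 ^ j)` with
`j ≤ m + 1`, so each squaring step from `K ^ 2` down to `I` has a kernel of order at least `|I|`.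
Hence `|I| ^ (m + 1) ≤ |K ^ 2| = 4 ^ (m + 1)`. -/
lemma card_pow_range_le [Finite K] {m : ℕ} (hexp : ∀ x : K, x ^ 2 ^ (m + 2) = 1)
    (hE : (powMonoidHom 2 : K →* K).ker.index = 4 ^ (m + 1)) :
    Nat.card (powMonoidHom (2 ^ (m + 1)) : K →* K).range ≤ 4 := by
  have key : ∀ t ≤ m, Nat.card (powMonoidHom (2 ^ (m + 1)) : K →* K).range ^ (t + 1) ≤
      Nat.card (powMonoidHom (2 ^ (m + 1 - t)) : K →* K).range := by
    intro t
    induction t with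
    | zero => simp
    | succ t ih =>
      intro ht
      have h := card_pow_range_succ (K := K) (m - t)
      rw [show m - t + 1 = m + 1 - t by omega] at h
      rw [show m + 1 - (t + 1) = m - t by omega, ← h, pow_succ, mul_comm]
      refine Nat.mul_le_mul ?_ (ih (by omega))
      refine Nat.card_le_card_of_injective (Subgroup.inclusion (le_inf ?_
        (pow_range_antitone (by omega)))) (Subgroup.inclusion_injective _)
      rintro _ ⟨x, rfl⟩
      rw [MonoidHom.mem_ker, powMonoidHom_apply, powMonoidHom_apply, ← pow_mul, ← pow_succ]
      exact hexp x
  have h := key m le_rfl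
  rw [show m + 1 - m = 1 by omega, pow_one 2, ← Subgroup.index_ker (powMonoidHom 2 : K →* K),
    hE] at h
  exact (Nat.pow_le_pow_iff_left (by omega)).1 h

/-- Each of the `m + 1` squaring steps from `K ^ 2` down to `1` has a kernel contained in the group
of involutions that are squares, so the order of that group to the power `m + 1` is at least
`|K ^ 2| = 4 ^ (m + 1)`. -/
lemma four_le_card_square_torsion [Finite K] {m : ℕ} (hexp : ∀ x : K, x ^ 2 ^ (m + 2) = 1)
    (hE : (powMonoidHom 2 : K →* K).ker.index = 4 ^ (m + 1)) :
    4 ≤ Nat.card ((powMonoidHom 2 : K →* K).ker ⊓ (powMonoidHom 2 : K →* K).range :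
      Subgroup K) := by
  have key : ∀ t ≤ m + 1, Nat.card (powMonoidHom (2 ^ (m + 2 - t)) : K →* K).range ≤
      Nat.card ((powMonoidHom 2 : K →* K).ker ⊓ (powMonoidHom 2 : K →* K).range :
        Subgroup K) ^ t := by
    intro t
    induction t with
    | zero =>
      intro _
      have : (powMonoidHom (2 ^ (m + 2)) : K →* K).range = ⊥ := by
        rw [eq_bot_iff]
        rintro _ ⟨x, rfl⟩
        exact hexp x
      simp [this]
    | succ t ih =>
      intro ht
      have h := card_pow_range_succ (K := K) (m + 1 - t)
      rw [show m + 1 - t + 1 = m + 2 - t by omega] at h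
      rw [show m + 2 - (t + 1) = m + 1 - t by omega, ← h, pow_succ, mul_comm]
      refine Nat.mul_le_mul (ih (by omega)) ?_
      have h1 := pow_range_antitone (K := K) (show 1 ≤ m + 1 - t by omega)
      rw [pow_one 2] at h1
      exact Nat.card_le_card_of_injective (Subgroup.inclusion (inf_le_inf le_rfl h1))
        (Subgroup.inclusion_injective _)
  have h := key (m + 1) le_rfl
  rw [show m + 2 - (m + 1) = 1 by omega, pow_one 2, ← Subgroup.index_ker (powMonoidHom 2 : K →* K),
    hE] at h
  exact (Nat.pow_le_pow_iff_left (by omega)).1 h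

/-- A sign character on an elementary abelian `2`-group of order more than `2` has a nontrivial
kernel. -/
lemma IsSignOn.exists_kernel [Finite K] {χ : K → ℤ} (hχ : IsSignOn χ) (H : Subgroup K)
    (hH : ∀ x ∈ H, x ^ 2 = 1) (hcard : 3 ≤ Nat.card H) : ∃ z ∈ H, z ≠ 1 ∧ χ z = 1 := by
  obtain ⟨a, b, ha, hb, hab⟩ : ∃ a b : H, a ≠ 1 ∧ b ≠ 1 ∧ a ≠ b := by
    have := Fintype.ofFinite H
    rw [Nat.card_eq_fintype_card] at hcard
    obtain ⟨a, ha⟩ := Fintype.exists_ne_of_one_lt_card (by omega : 1 < Fintype.card H) 1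
    classical
    obtain ⟨b, hb⟩ : ∃ b, b ∉ ({1, a} : Finset H) := by
      by_contra! h
      have h2 := Finset.card_le_card (fun x _ => h x : Finset.univ ⊆ ({1, a} : Finset H))
      have h3 : ({1, a} : Finset H).card ≤ 2 := Finset.card_le_two
      rw [Finset.card_univ] at h2
      omega
    simp only [Finset.mem_insert, Finset.mem_singleton, not_or] at hb
    exact ⟨a, b, ha, hb.1, fun h => hb.2 h.symm⟩
  have ha2 := hH a a.2
  have hb2 := hH b b.2
  rcases hχ.eq_or a ha2 with h | h
  · exact ⟨a, a.2, by simpa using ha, h⟩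
  rcases hχ.eq_or b hb2 with h' | h'
  · exact ⟨b, b.2, by simpa using hb, h'⟩
  refine ⟨a * b, H.mul_mem a.2 b.2, fun h1 => hab ?_, ?_⟩
  · rw [pow_two] at ha2
    exact Subtype.ext (mul_left_cancel (ha2.trans h1.symm))
  · rw [hχ.map_mul _ _ ha2 hb2, h, h']; norm_num

/-- A subgroup of index `2 * 4 ^ m` in a `2`-group lies in a subgroup of index `2`. -/
lemma exists_index_two_of_lt [Finite K] {H : Subgroup K} {m : ℕ} (hp : IsPGroup 2 K)
    (hH : H.index = 2 * 4 ^ m) : ∃ L : Subgroup K, H ≤ L ∧ L.index = 2 := by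
  have : Fact (Nat.Prime 2) := ⟨Nat.prime_two⟩
  obtain ⟨n, hn⟩ := IsPGroup.iff_card.1 (hp.to_subgroup H)
  have h4 : (4 : ℕ) ^ m = 2 ^ (2 * m) := by rw [pow_mul]; norm_num
  have hK : Nat.card K = 2 ^ (n + 2 * m) * 2 := by
    rw [← H.card_mul_index, hn, hH, h4, pow_add]; ring
  obtain ⟨L, hL, hle⟩ := Sylow.exists_subgroup_card_pow_prime_le 2
    (hK ▸ dvd_mul_right _ _ : 2 ^ (n + 2 * m) ∣ Nat.card K) H hn (by omega)
  refine ⟨L, hle, ?_⟩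
  have := L.card_mul_index
  rw [hL, hK] at this
  exact Nat.eq_of_mul_eq_mul_left (by positivity) this

lemma mem_zpowers_of_sq [Finite K] {z x : K} (hz2 : z ^ 2 = 1) :
    x ∈ Subgroup.zpowers z ↔ x = 1 ∨ x = z := by
  constructor
  · intro h
    obtain ⟨n, hn, rfl⟩ : ∃ n, n < 2 ∧ z ^ n = x := by
      obtain ⟨n, rfl⟩ := (mem_powers_iff_mem_zpowers (x := z)).2 h
      exact ⟨n % 2, Nat.mod_lt _ (by norm_num), (pow_eq_pow_mod n hz2).symm⟩
    interval_cases n <;> simp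
  · rintro (rfl | rfl)
    · exact one_mem _
    · exact Subgroup.mem_zpowers _

lemma index_comap_sq {z : K} {m : ℕ} (hE : (powMonoidHom 2 : K →* K).ker.index = 4 ^ (m + 1))
    (hz1 : z ≠ 1) (hz2 : z ^ 2 = 1) (hz : z ∈ (powMonoidHom 2 : K →* K).range) :
    ((Subgroup.zpowers z).comap (powMonoidHom 2)).index = 2 * 4 ^ m := by
  have h1 : (powMonoidHom 2 : K →* K).ker.relIndex ((Subgroup.zpowers z).comap (powMonoidHom 2))
      = 2 := by
    rw [Subgroup.relIndex_ker, Subgroup.map_comap_eq, inf_eq_right.2 (by simpa using hz),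
      Nat.card_zpowers]
    exact orderOf_eq_prime hz2 hz1
  have h2 := Subgroup.relIndex_mul_index (MonoidHom.ker_le_comap (f := (powMonoidHom 2 : K →* K))
    (H := Subgroup.zpowers z))
  rw [h1, hE, pow_succ] at h2
  omega

/-- The data for the inductive construction of signatures: an involution `z` that is a square and on
which `χ` is trivial, and a subgroup `L` of index `2` containing the square roots of the elements of
`⟨z⟩`, such that `L ⧸ ⟨z⟩` has exponent dividing `2 ^ (m + 1)`.

The choice depends on `I = K ^ (2 ^ (m + 1))`, which has order at most `4`. If `|I| = 4`, then `z` is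
taken in `I` and `L` is the preimage of `⟨z⟩` under `x ↦ x ^ (2 ^ (m + 1))`. If `I ≤ ⟨z⟩` for an
admissible `z`, any `L` of index `2` containing those square roots does. Otherwise
`|I| = 2`, any admissible `z` does, and `L` is the kernel of `x ↦ x ^ (2 ^ (m + 1))`. -/
lemma exists_reduction [Finite K] {m : ℕ} (hexp : ∀ x : K, x ^ 2 ^ (m + 2) = 1)
    (hE : (powMonoidHom 2 : K →* K).ker.index = 4 ^ (m + 1)) {χ : K → ℤ} (hχ : IsSignOn χ) :
    ∃ (z : K) (L : Subgroup K), z ≠ 1 ∧ z ^ 2 = 1 ∧ z ∈ (powMonoidHom 2 : K →* K).range ∧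
      χ z = 1 ∧ L.index = 2 ∧ (Subgroup.zpowers z).comap (powMonoidHom 2) ≤ L ∧
      ∀ x ∈ L, x ^ 2 ^ (m + 1) ∈ Subgroup.zpowers z := by
  set I := (powMonoidHom (2 ^ (m + 1)) : K →* K).range with hI
  have hI2 : ∀ x ∈ I, x ^ 2 = 1 := by
    rintro _ ⟨x, rfl⟩
    rw [powMonoidHom_apply, ← pow_mul, ← pow_succ]
    exact hexp x
  have hIsq : I ≤ (powMonoidHom 2 : K →* K).range := by
    have h := pow_range_antitone (K := K) (show 1 ≤ m + 1 by omega)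
    rwa [pow_one 2] at h
  have hp : IsPGroup 2 K := fun x => ⟨m + 2, hexp x⟩
  have hpow : ∀ x : K, x ^ 2 ^ (m + 1) = (x ^ 2) ^ 2 ^ m := fun x => by
    rw [← pow_mul, ← pow_succ']
  have hcaseB : ∀ z : K, z ≠ 1 → z ^ 2 = 1 → z ∈ (powMonoidHom 2 : K →* K).range → χ z = 1 →
      I ≤ Subgroup.zpowers z → ∃ (z : K) (L : Subgroup K), z ≠ 1 ∧ z ^ 2 = 1 ∧
      z ∈ (powMonoidHom 2 : K →* K).range ∧
      χ z = 1 ∧ L.index = 2 ∧ (Subgroup.zpowers z).comap (powMonoidHom 2) ≤ L ∧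
      ∀ x ∈ L, x ^ 2 ^ (m + 1) ∈ Subgroup.zpowers z := by
    intro z h1 h2 h3 h4 h5
    obtain ⟨L, hL, hL2⟩ := exists_index_two_of_lt hp (index_comap_sq hE h1 h2 h3)
    exact ⟨z, L, h1, h2, h3, h4, hL2, hL, fun x _ => h5 ⟨x, rfl⟩⟩
  have hle4 : Nat.card I ≤ 4 := card_pow_range_le hexp hE
  by_cases h3 : 3 ≤ Nat.card I
  · obtain ⟨z, hzI, hz1, hzχ⟩ := hχ.exists_kernel I hI2 h3
    refine ⟨z, (Subgroup.zpowers z).comap (powMonoidHom (2 ^ (m + 1))), hz1, hI2 z hzI, hIsq hzI,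
      hzχ, ?_, ?_, fun x hx => hx⟩
    · rw [Subgroup.index_comap, ← hI]
      have h := Subgroup.relIndex_mul_relIndex ⊥ (Subgroup.zpowers z) I bot_le (by simpa using hzI)
      rw [Subgroup.relIndex_bot_left, Subgroup.relIndex_bot_left, Nat.card_zpowers,
        orderOf_eq_prime (hI2 z hzI) hz1] at h
      omega
    · intro x hx
      rw [Subgroup.mem_comap, powMonoidHom_apply] at hx ⊢
      rw [hpow]
      exact pow_mem hx _
  by_cases hw : ∃ w ∈ I, w ≠ 1 ∧ χ w = 1
  · obtain ⟨w, hwI, hw1, hwχ⟩ := hw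
    refine hcaseB w hw1 (hI2 w hwI) (hIsq hwI) hwχ ?_
    have hwle : Subgroup.zpowers w ≤ I := by simpa using hwI
    refine (Subgroup.eq_of_le_of_card_ge hwle ?_).ge
    rw [Nat.card_zpowers, orderOf_eq_prime (hI2 w hwI) hw1]
    omega
  obtain ⟨z, hzT, hz1, hzχ⟩ := hχ.exists_kernel
    ((powMonoidHom 2 : K →* K).ker ⊓ (powMonoidHom 2 : K →* K).range) (fun x hx => hx.1)
    ((by norm_num : 3 ≤ 4).trans (four_le_card_square_torsion hexp hE))
  have hz2 : z ^ 2 = 1 := hzT.1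
  by_cases hI1 : I = ⊥
  · exact hcaseB z hz1 hz2 hzT.2 hzχ (by rw [hI1]; exact bot_le)
  have hIc : Nat.card I = 2 := by
    have := (Subgroup.one_lt_card_iff_ne_bot I).2 hI1
    omega
  have hm : m ≠ 0 := by
    rintro rfl
    rw [Subgroup.index_ker] at hE
    rw [hI, zero_add, pow_one 2, hE] at hIc
    norm_num at hIc
  refine ⟨z, (powMonoidHom (2 ^ (m + 1)) : K →* K).ker, hz1, hz2, hzT.2, hzχ,
    by rw [Subgroup.index_ker, ← hI, hIc], ?_, fun x hx => ?_⟩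
  · intro x hx
    rw [Subgroup.mem_comap, powMonoidHom_apply] at hx
    rw [MonoidHom.mem_ker, powMonoidHom_apply, hpow]
    obtain ⟨k, rfl⟩ := Nat.exists_eq_succ_of_ne_zero hm
    rw [Nat.succ_eq_add_one, pow_succ' 2 k, pow_mul]
    rcases (mem_zpowers_of_sq hz2).1 hx with h | h <;> rw [h] <;> simp [hz2]
  · rw [show x ^ 2 ^ (m + 1) = 1 from hx]
    exact one_mem _

end structureLemma

/-! ### Signature functions -/

/-- `B` is a signature function for the sign character `χ` of `E = {e | e ^ 2 = 1}`: it takes values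
`1` and `-1`, transforms by `χ` under translation by `E`, and its autocorrelation vanishes
outside `E`. -/
structure IsSignature {K : Type*} [CommGroup K] [Fintype K] (χ B : K → ℤ) : Prop where
  eq_or : ∀ x, B x = 1 ∨ B x = -1
  map_mul : ∀ x e, e ^ 2 = 1 → B (x * e) = χ e * B x
  sum_eq_zero : ∀ g, g ^ 2 ≠ 1 → ∑ x, B (g * x) * B x = 0

open Classical in
/-- The extension of `χ` from `E = {e | e ^ 2 = 1}` to `E ∪ y E` with value `ε` at `y`. It is
multiplicative there when `y ^ 2 ∈ E`, `χ (y ^ 2) = 1` and `ε = 1` or `ε = -1`; its values elsewhere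
are junk. -/
noncomputable def extendSign {K : Type*} [CommGroup K] (χ : K → ℤ) (y : K) (ε : ℤ) (x : K) : ℤ :=
  if x ^ 2 = 1 then χ x else ε * χ (x * y⁻¹)

section extendSign

variable {K : Type*} [CommGroup K] {χ : K → ℤ} {y : K} {ε : ℤ}

lemma extendSign_eq_or (hχ : IsSignOn χ) (hε : ε = 1 ∨ ε = -1)
    {x : K} (hx : x ^ 2 = 1 ∨ x ^ 2 = y ^ 2) :
    extendSign χ y ε x = 1 ∨ extendSign χ y ε x = -1 := by
  unfold extendSign
  split_ifs with h
  · exact hχ.eq_or x h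
  · have h1 : (x * y⁻¹) ^ 2 = 1 := by
      rw [mul_pow, hx.resolve_left h, inv_pow, mul_inv_cancel]
    rcases hε with rfl | rfl <;> rcases hχ.eq_or _ h1 with h2 | h2 <;> rw [h2] <;> norm_num

lemma extendSign_mul (hχ : IsSignOn χ) (hε : ε = 1 ∨ ε = -1)
    (hz2 : (y ^ 2) ^ 2 = 1) (hz : χ (y ^ 2) = 1) {a b : K} (ha : a ^ 2 = 1 ∨ a ^ 2 = y ^ 2)
    (hb : b ^ 2 = 1 ∨ b ^ 2 = y ^ 2) :
    extendSign χ y ε (a * b) = extendSign χ y ε a * extendSign χ y ε b := by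
  have hsq : ∀ {x : K}, x ^ 2 = y ^ 2 → (x * y⁻¹) ^ 2 = 1 := fun h => by
    rw [mul_pow, h, inv_pow, mul_inv_cancel]
  have hzinv : (y ^ 2)⁻¹ = y ^ 2 := by
    rw [inv_eq_iff_mul_eq_one, ← pow_two, hz2]
  unfold extendSign
  by_cases h1 : a ^ 2 = 1 <;> by_cases h2 : b ^ 2 = 1
  · rw [if_pos h1, if_pos h2, if_pos (by rw [mul_pow, h1, h2, one_mul]), hχ.map_mul _ _ h1 h2]
  · rw [if_pos h1, if_neg h2, if_neg (by rw [mul_pow, h1, one_mul]; exact h2), mul_assoc,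
      hχ.map_mul _ _ h1 (hsq (hb.resolve_left h2))]
    ring
  · rw [if_neg h1, if_pos h2, if_neg (by rw [mul_pow, h2, mul_one]; exact h1), mul_right_comm,
      hχ.map_mul _ _ (hsq (ha.resolve_left h1)) h2]
    ring
  · have ha' := ha.resolve_left h1
    have hb' := hb.resolve_left h2
    have hab : (a * b) ^ 2 = 1 := by rw [mul_pow, ha', hb', ← pow_two, hz2]
    have key : χ (a * y⁻¹) * χ (b * y⁻¹) = χ (a * b) := by
      rw [← hχ.map_mul _ _ (hsq ha') (hsq hb'), mul_mul_mul_comm, ← mul_inv, ← pow_two, hzinv,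
        hχ.map_mul _ _ hab hz2, hz, mul_one]
    have hεε : ε * ε = 1 := by rcases hε with rfl | rfl <;> norm_num
    rw [if_neg h1, if_neg h2, if_pos hab, ← key]
    linear_combination (-(χ (a * y⁻¹) * χ (b * y⁻¹))) * hεε

end extendSign

lemma sum_quotient_eq_zero {H Q : Type*} [Group H] [Group Q] [Fintype H] [Fintype Q]
    (π : H →* Q) (hπ : Function.Surjective π) (F : Q → ℤ) (hF : ∑ q, F q = 0) :
    ∑ x, F (π x) = 0 := by
  classical
  rw [← Finset.sum_fiberwise (s := Finset.univ) (g := π)]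
  have h : ∀ q, ∑ x with π x = q, F (π x) = (Finset.univ.filter (fun x => π x = 1)).card * F q := by
    intro q
    rw [Finset.sum_congr rfl (g := fun _ => F q) (fun x hx => by rw [(Finset.mem_filter.1 hx).2]),
      Finset.sum_const, MonoidHom.card_fiber_eq_of_mem_range π (hπ q) (hπ 1), nsmul_eq_mul]
  rw [Finset.sum_congr rfl (fun q _ => h q), ← Finset.mul_sum, hF, mul_zero]

open Classical in
/-- Pulling back to `L` a signature function on `L ⧸ ⟨z⟩`, where `z = y ^ 2`. The involutions of the
quotient are the images of the `e` with `e ^ 2 ∈ ⟨z⟩`, and the extension of `χ` with value `ε` at `y`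
is trivial on `z`, so it descends to the quotient. -/
lemma exists_block {K : Type*} [CommGroup K] [Fintype K] (L : Subgroup K) (y : K)
    {χ : K → ℤ} (hχ : IsSignOn χ) {ε : ℤ} (hε : ε = 1 ∨ ε = -1)
    (hz2 : (y ^ 2) ^ 2 = 1) (hz : χ (y ^ 2) = 1)
    (hL : (Subgroup.zpowers (y ^ 2)).comap (powMonoidHom 2) ≤ L)
    (hQ : ∀ [Fintype (L ⧸ (Subgroup.zpowers (y ^ 2)).subgroupOf L)]
      (ψ : L ⧸ (Subgroup.zpowers (y ^ 2)).subgroupOf L → ℤ), IsSignOn ψ →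
      ∃ B, IsSignature ψ B) :
    ∃ X : K → ℤ, (∀ x, X x = 1 ∨ X x = -1) ∧
      (∀ x ∈ L, ∀ e, (e ^ 2 = 1 ∨ e ^ 2 = y ^ 2) → X (x * e) = extendSign χ y ε e * X x) ∧
      ∀ g ∈ L, ¬ (g ^ 2 = 1 ∨ g ^ 2 = y ^ 2) →
        ∑ x, (if x ∈ L then X (g * x) * X x else 0) = 0 := by
  set N := (Subgroup.zpowers (y ^ 2)).subgroupOf L with hN
  have hmemN : ∀ x : L, x ∈ N ↔ (x : K) = 1 ∨ (x : K) = y ^ 2 := fun x => by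
    rw [hN, Subgroup.mem_subgroupOf, mem_zpowers_of_sq hz2]
  have hmemL : ∀ {e : K}, (e ^ 2 = 1 ∨ e ^ 2 = y ^ 2) → e ∈ L := fun {e} he =>
    hL ((mem_zpowers_of_sq hz2).2 he)
  have hsqQ : ∀ x : L, (QuotientGroup.mk x : L ⧸ N) ^ 2 = 1 ↔
      ((x : K) ^ 2 = 1 ∨ (x : K) ^ 2 = y ^ 2) := fun x => by
    rw [← QuotientGroup.mk_pow, QuotientGroup.eq_one_iff, hmemN]
    simp
  let ψ : L ⧸ N → ℤ := fun q => extendSign χ y ε (q.out : L)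
  have hψ : ∀ x : L, ((x : K) ^ 2 = 1 ∨ (x : K) ^ 2 = y ^ 2) →
      ψ (QuotientGroup.mk x) = extendSign χ y ε x := by
    intro x hx
    obtain ⟨n, hn⟩ := QuotientGroup.mk_out_eq_mul N x
    have hn' := (hmemN n).1 n.2
    have hn2 : ((n : L) : K) ^ 2 = 1 := by rcases hn' with h | h <;> rw [h] <;> simp [hz2]
    change extendSign χ y ε ((QuotientGroup.mk x : L ⧸ N).out : L) = _
    rw [hn, Subgroup.coe_mul, extendSign_mul hχ hε hz2 hz hx (Or.inl hn2)]
    have : extendSign χ y ε ((n : L) : K) = 1 := by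
      unfold extendSign
      rw [if_pos hn2]
      rcases hn' with h | h <;> rw [h]
      · exact hχ.map_one
      · exact hz
    rw [this, mul_one]
  have := Fintype.ofFinite (L ⧸ N)
  obtain ⟨B, hB⟩ := hQ ψ ⟨fun q hq => by
      induction q using QuotientGroup.induction_on with
      | H x =>
        have hx := (hsqQ x).1 hq
        rw [hψ x hx]
        exact extendSign_eq_or hχ hε hx, fun p q hp hq => by
      induction p using QuotientGroup.induction_on with
      | H a =>
        induction q using QuotientGroup.induction_on with
        | H b =>
          have ha := (hsqQ a).1 hp
          have hb := (hsqQ b).1 hq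
          rw [← QuotientGroup.mk_mul, hψ a ha, hψ b hb, hψ (a * b) ((hsqQ _).1 (by
            rw [QuotientGroup.mk_mul, mul_pow, hp, hq, one_mul])), Subgroup.coe_mul,
            extendSign_mul hχ hε hz2 hz ha hb]⟩
  let X : K → ℤ := fun x => if h : x ∈ L then B (QuotientGroup.mk ⟨x, h⟩) else 1
  have hX : ∀ x (h : x ∈ L), X x = B (QuotientGroup.mk ⟨x, h⟩) := fun x h => dif_pos h
  refine ⟨X, fun x => ?_, fun x hx e he => ?_, fun g hg hgE => ?_⟩
  · by_cases h : x ∈ L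
    · rw [hX x h]; exact hB.eq_or _
    · exact Or.inl (dif_neg h)
  · have heL := hmemL he
    rw [hX x hx, hX _ (L.mul_mem hx heL), ← hψ ⟨e, heL⟩ he, ← hB.map_mul _ _ ((hsqQ ⟨e, heL⟩).2 he)]
    rfl
  · rw [← Finset.sum_filter, Finset.sum_subtype (p := fun x => x ∈ L) _ (by simp)]
    have h0 := sum_quotient_eq_zero (QuotientGroup.mk' N) (QuotientGroup.mk'_surjective N)
      (fun q => B (QuotientGroup.mk ⟨g, hg⟩ * q) * B q)
      (hB.sum_eq_zero _ (fun h => hgE ((hsqQ ⟨g, hg⟩).1 h)))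
    rw [← h0]
    refine Finset.sum_congr (by congr) (fun x _ => ?_)
    rw [hX _ (L.mul_mem hg x.2), hX _ x.2]
    rfl

open Classical in
/-- Gluing two blocks. Let `P` and `M` be the blocks on `L` for the two extensions of `χ`, with values
`1` and `-1` at `y`. The function equal to `P` on `L` and to a translate of `M` on the other coset is
a signature function for `χ`. For shifts outside `L` the autocorrelation vanishes because
the two extensions differ at `y`; for shifts in `y E` the two cosets contribute opposite amounts. -/
lemma exists_signature_of_blocks {K : Type*} [CommGroup K] [Fintype K] (L : Subgroup K) (y : K)
    {χ : K → ℤ} (hχ : IsSignOn χ) (hy : y ^ 2 ≠ 1) (hindex : L.index = 2)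
    (hL : ∀ e, (e ^ 2 = 1 ∨ e ^ 2 = y ^ 2) → e ∈ L)
    (hX : ∀ ε : ℤ, (ε = 1 ∨ ε = -1) → ∃ X : K → ℤ, (∀ x, X x = 1 ∨ X x = -1) ∧
      (∀ x ∈ L, ∀ e, (e ^ 2 = 1 ∨ e ^ 2 = y ^ 2) → X (x * e) = extendSign χ y ε e * X x) ∧
      ∀ g ∈ L, ¬ (g ^ 2 = 1 ∨ g ^ 2 = y ^ 2) →
        ∑ x, (if x ∈ L then X (g * x) * X x else 0) = 0) :
    ∃ B, IsSignature χ B := by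
  obtain ⟨P, hP1, hP2, hP3⟩ := hX 1 (Or.inl rfl)
  obtain ⟨M, hM1, hM2, hM3⟩ := hX (-1) (Or.inr rfl)
  obtain ⟨c, hc⟩ : ∃ c, c ∉ L := by
    by_contra! h
    rw [(Subgroup.eq_top_iff' L).2 h, Subgroup.index_top] at hindex
    norm_num at hindex
  have hmul : ∀ {a b : K}, a * b ∈ L ↔ (a ∈ L ↔ b ∈ L) := Subgroup.mul_mem_iff_of_index_two hindex
  have hcx : ∀ {x : K}, c⁻¹ * x ∈ L ↔ x ∉ L := fun {x} => by
    rw [hmul, L.inv_mem_iff]; tauto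
  let B : K → ℤ := fun x => if x ∈ L then P x else M (c⁻¹ * x)
  have hBL : ∀ {x}, x ∈ L → B x = P x := fun h => if_pos h
  have hBN : ∀ {x}, x ∉ L → B x = M (c⁻¹ * x) := fun h => if_neg h
  have hB1 : ∀ x, B x = 1 ∨ B x = -1 := fun x => by
    by_cases h : x ∈ L
    · rw [hBL h]; exact hP1 x
    · rw [hBN h]; exact hM1 _
  have hB2 : ∀ x e, e ^ 2 = 1 → B (x * e) = χ e * B x := fun x e he => by
    have hext : ∀ ε, extendSign χ y ε e = χ e := fun ε => if_pos he
    have heL := hL e (Or.inl he)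
    by_cases h : x ∈ L
    · rw [hBL h, hBL (L.mul_mem h heL), hP2 x h e (Or.inl he), hext]
    · rw [hBN h, hBN (by rw [hmul]; tauto), ← mul_assoc, hM2 _ (hcx.2 h) e (Or.inl he), hext]
  have hyL : y ∈ L := hL y (Or.inr rfl)
  have hexty : ∀ ε, extendSign χ y ε y = ε := fun ε => by
    unfold extendSign
    rw [if_neg hy, mul_inv_cancel, hχ.map_one, mul_one]
  have hByL : ∀ x ∈ L, B (x * y) = B x := fun x h => by
    rw [hBL h, hBL (L.mul_mem h hyL), hP2 x h y (Or.inr rfl), hexty, one_mul]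
  have hByN : ∀ x ∉ L, B (x * y) = - B x := fun x h => by
    rw [hBN h, hBN (by rw [hmul]; tauto), ← mul_assoc, hM2 _ (hcx.2 h) y (Or.inr rfl), hexty,
      neg_one_mul]
  have hBB : ∀ x, B x * B x = 1 := fun x => by rcases hB1 x with h | h <;> rw [h] <;> norm_num
  -- a summand that changes sign under a translation has vanishing sum
  have hodd : ∀ (F : K → ℤ) (t : K), (∀ x, F (t * x) = - F x) → ∑ x, F x = 0 := by
    intro F t h
    have h1 := Equiv.sum_comp (Equiv.mulLeft t) F
    simp only [Equiv.coe_mulLeft, h, Finset.sum_neg_distrib] at h1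
    omega
  refine ⟨B, hB1, hB2, fun g hg => ?_⟩
  by_cases hgL : g ∈ L
  · by_cases hgE : g ^ 2 = y ^ 2
    · have he : (g * y⁻¹) ^ 2 = 1 := by rw [mul_pow, hgE, inv_pow, mul_inv_cancel]
      have hgx : ∀ x, B (g * x) = χ (g * y⁻¹) * B (x * y) := fun x => by
        rw [← hB2 _ _ he]
        congr 1
        rw [mul_comm g y⁻¹, mul_assoc, mul_inv_cancel_left, mul_comm]
      refine hodd _ c (fun x => ?_)
      rw [hgx, hgx]
      by_cases h : x ∈ L
      · rw [hByL x h, hByN _ (by rw [hmul]; tauto)]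
        linear_combination (-χ (g * y⁻¹)) * hBB (c * x) + χ (g * y⁻¹) * hBB x
      · rw [hByN x h, hByL _ (by rw [hmul]; tauto)]
        linear_combination (χ (g * y⁻¹)) * hBB (c * x) - χ (g * y⁻¹) * hBB x
    · have hn : ¬ (g ^ 2 = 1 ∨ g ^ 2 = y ^ 2) := by tauto
      have h1 := hP3 g hgL hn
      have h2 := hM3 g hgL hn
      rw [← Equiv.sum_comp (Equiv.mulLeft c⁻¹)] at h2
      have h3 := congrArg₂ (fun a b : ℤ => a + b) h1 h2
      simp only [← Finset.sum_add_distrib] at h3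
      refine Eq.trans (Finset.sum_congr rfl (fun x _ => ?_)) h3
      simp only [Equiv.coe_mulLeft, hcx]
      by_cases h : x ∈ L
      · rw [hBL h, hBL (L.mul_mem hgL h)]; simp [h]
      · rw [hBN h, hBN (by rw [hmul]; tauto), mul_left_comm]; simp [h]
  · refine hodd _ y (fun x => ?_)
    rw [mul_left_comm, mul_comm y, mul_comm y]
    by_cases h : x ∈ L
    · rw [hByL x h, hByN _ (by rw [hmul]; tauto)]; ring
    · rw [hByN x h, hByL _ (by rw [hmul]; tauto)]; ring

universe u in
/-- If `K` has exponent dividing `2 ^ (m + 1)` and `E = {e | e ^ 2 = 1}` has index `4 ^ m`, each sign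
character of `E` has a signature function. The induction passes from `K` to `L ⧸ ⟨z⟩`, with `z` and
`L` from `exists_reduction`. -/
theorem exists_signature (m : ℕ) : ∀ (K : Type u) [CommGroup K] [Fintype K],
    (∀ x : K, x ^ 2 ^ (m + 1) = 1) → (powMonoidHom 2 : K →* K).ker.index = 4 ^ m →
    ∀ χ : K → ℤ, IsSignOn χ → ∃ B, IsSignature χ B := by
  induction m with
  | zero =>
    intro K _ _ hexp _ χ hχ
    have h2 : ∀ x : K, x ^ 2 = 1 := by simpa using hexp
    exact ⟨χ, fun x => hχ.eq_or x (h2 x), fun x e _ => by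
      rw [hχ.map_mul _ _ (h2 _) (h2 _), mul_comm], fun g hg => absurd (h2 g) hg⟩
  | succ m ih =>
    intro K _ _ hexp hE χ hχ
    obtain ⟨z, L, hz1, hz2, ⟨y, hyz⟩, hzχ, hL2, hEL, hLexp⟩ := exists_reduction hexp hE hχ
    rw [powMonoidHom_apply] at hyz
    subst hyz
    refine exists_signature_of_blocks L y hχ hz1 hL2
      (fun e he => hEL ((mem_zpowers_of_sq hz2).2 he)) (fun ε hε => ?_)
    refine exists_block L y hχ hε hz2 hzχ hEL (fun {_} ψ hψ => ih _ ?_ ?_ ψ hψ)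
    · intro q
      induction q using QuotientGroup.induction_on with
      | H x =>
        rw [← QuotientGroup.mk_pow, QuotientGroup.eq_one_iff, Subgroup.mem_subgroupOf]
        exact hLexp x x.2
    · rw [← Subgroup.index_comap_of_surjective _ (QuotientGroup.mk'_surjective _)]
      have h1 : (powMonoidHom 2 : (L ⧸ (Subgroup.zpowers (y ^ 2)).subgroupOf L) →* _).ker.comap
          (QuotientGroup.mk' _) =
          ((Subgroup.zpowers (y ^ 2)).comap (powMonoidHom 2)).subgroupOf L := by
        ext x
        rw [Subgroup.mem_comap, MonoidHom.mem_ker, powMonoidHom_apply, ← map_pow,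
          QuotientGroup.mk'_apply, QuotientGroup.eq_one_iff]
        rfl
      rw [h1]
      have h2 := Subgroup.relIndex_mul_index hEL
      rw [hL2, index_comap_sq hE hz1 hz2 ⟨y, rfl⟩] at h2
      have : ((Subgroup.zpowers (y ^ 2)).comap (powMonoidHom 2)).relIndex L = 4 ^ m := by omega
      exact this

/-! ### Rank and involutions of abelian `2`-groups -/

section rank

variable {K : Type*} [CommGroup K]

/-- Adjoining generators to `P` one at a time, each at least doubles the subgroup until it is all
of `K`. -/
lemma exists_finset_sup_eq_top [Finite K] (P : Subgroup K) (n : ℕ) :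
    ∃ S : Finset K, S.card ≤ n ∧ (Subgroup.closure (S : Set K) ⊔ P = ⊤ ∨
      2 ^ n * Nat.card P ≤ Nat.card (Subgroup.closure (S : Set K) ⊔ P : Subgroup K)) := by
  classical
  induction n with
  | zero => exact ⟨∅, by simp, Or.inr (by simp)⟩
  | succ n ih =>
    obtain ⟨S, hS, h | h⟩ := ih
    · exact ⟨S, by omega, Or.inl h⟩
    by_cases htop : Subgroup.closure (S : Set K) ⊔ P = ⊤
    · exact ⟨S, by omega, Or.inl htop⟩
    obtain ⟨x, hx⟩ : ∃ x, x ∉ Subgroup.closure (S : Set K) ⊔ P := by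
      by_contra! hall
      exact htop ((Subgroup.eq_top_iff' _).2 hall)
    refine ⟨insert x S, (Finset.card_insert_le _ _).trans (by omega), Or.inr ?_⟩
    have hle : Subgroup.closure (S : Set K) ⊔ P ≤
        Subgroup.closure ((insert x S : Finset K) : Set K) ⊔ P :=
      sup_le_sup_right (Subgroup.closure_mono (by simp)) P
    obtain ⟨q, hq⟩ := Subgroup.card_dvd_of_le hle
    have hxm : x ∈ Subgroup.closure ((insert x S : Finset K) : Set K) ⊔ P :=
      Subgroup.mem_sup_left (Subgroup.subset_closure (by simp))
    have hpos : 0 < Nat.card (Subgroup.closure (S : Set K) ⊔ P : Subgroup K) := Nat.card_pos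
    have hq2 : 2 ≤ q := by
      by_contra! hq'
      have : q ≤ 1 := by omega
      have hge : Nat.card (Subgroup.closure ((insert x S : Finset K) : Set K) ⊔ P : Subgroup K) ≤
          Nat.card (Subgroup.closure (S : Set K) ⊔ P : Subgroup K) := by
        rw [hq]; nlinarith
      have := Subgroup.eq_of_le_of_card_ge hle hge
      exact hx (this ▸ hxm)
    rw [hq, pow_succ]
    nlinarith

/-- The squares of an abelian `2`-group are non-generators. -/
lemma eq_top_of_sup_squares {n : ℕ} (hexp : ∀ x : K, x ^ 2 ^ n = 1) (H : Subgroup K)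
    (hH : H ⊔ (powMonoidHom 2 : K →* K).range = ⊤) : H = ⊤ := by
  have key : ∀ j, ∀ x : K, ∃ h ∈ H, ∃ w : K, x = h * w ^ 2 ^ j := by
    intro j
    induction j with
    | zero => exact fun x => ⟨1, H.one_mem, x, by simp⟩
    | succ j ih =>
      intro x
      obtain ⟨h, hh, _, ⟨w, rfl⟩, rfl⟩ := Subgroup.mem_sup.1 (hH ▸ Subgroup.mem_top x)
      obtain ⟨h', hh', v, rfl⟩ := ih w
      refine ⟨h * h' ^ 2, H.mul_mem hh (H.pow_mem hh' 2), v, ?_⟩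
      rw [powMonoidHom_apply, mul_pow, ← pow_mul, ← pow_succ, mul_assoc]
  rw [Subgroup.eq_top_iff']
  intro x
  obtain ⟨h, hh, w, rfl⟩ := key n x
  rwa [hexp, mul_one]

/-- In an abelian `2`-group `K`, the involutions and `1` form a group of order `|K ⧸ K ^ 2|`, which
is `2` to the rank of `K` by the Burnside basis theorem. -/
lemma card_involutions [Finite K] {n : ℕ} (hexp : ∀ x : K, x ^ 2 ^ n = 1) :
    Nat.card (powMonoidHom 2 : K →* K).ker = 2 ^ Group.rank K := by
  have : Fact (Nat.Prime 2) := ⟨Nat.prime_two⟩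
  have hp : IsPGroup 2 K := fun x => ⟨n, hexp x⟩
  set P := (powMonoidHom 2 : K →* K).range with hP
  have h1 := Subgroup.card_mul_index (powMonoidHom 2 : K →* K).ker
  rw [Subgroup.index_ker, ← hP, ← Subgroup.index_mul_card P] at h1
  have h2 : Nat.card (powMonoidHom 2 : K →* K).ker = P.index :=
    Nat.eq_of_mul_eq_mul_right Nat.card_pos h1
  obtain ⟨s, hs⟩ := IsPGroup.iff_card.1 (hp.to_subgroup (powMonoidHom 2 : K →* K).ker)
  rw [hs]
  congr 1
  apply le_antisymm
  · have hQ : Nat.card (K ⧸ P) ∣ 2 ^ Group.rank (K ⧸ P) := by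
      refine card_dvd_exponent_pow_rank' (K ⧸ P) (fun q => ?_)
      induction q using QuotientGroup.induction_on with
      | H x =>
        rw [← QuotientGroup.mk_pow, QuotientGroup.eq_one_iff]
        exact ⟨x, rfl⟩
    have hr := Group.rank_le_of_surjective (QuotientGroup.mk' P) (QuotientGroup.mk'_surjective P)
    rw [← Subgroup.index_eq_card, ← h2, hs] at hQ
    exact ((Nat.pow_dvd_pow_iff_le_right (by norm_num)).1 hQ).trans hr
  · obtain ⟨S, hS, h⟩ := exists_finset_sup_eq_top P s
    have htop : Subgroup.closure (S : Set K) ⊔ P = ⊤ := by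
      refine h.elim id (fun h => ?_)
      rw [← hs, h2, Subgroup.index_mul_card] at h
      exact Subgroup.eq_top_of_le_card _ h
    exact (Group.rank_le (eq_top_of_sup_squares hexp _ htop)).trans hS

end rank

/-! ### Difference sets from sign functions -/

/-- A `±1`-valued function with vanishing autocorrelation at all `g ≠ 1` is `1` exactly on a Hadamard
difference set. -/
lemma isHadamardGroup_of_sign {G : Type*} [Group G] [Fintype G] [Nontrivial G] (F : G → ℤ)
    (hF : ∀ x, F x = 1 ∨ F x = -1) (hsum : ∀ g, g ≠ 1 → ∑ x, F (g * x) * F x = 0) :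
    IsHadamardGroup G := by
  classical
  let D : Set G := {x | F x = 1}
  have hk : 2 * (Nat.card D : ℤ) = Nat.card G + ∑ x, F x := by
    have h1 : (Nat.card D : ℤ) = ∑ x, if F x = 1 then (1 : ℤ) else 0 := by
      rw [Nat.card_eq_fintype_card, Finset.sum_boole, Fintype.card_subtype]
      rfl
    rw [h1, Finset.mul_sum, Nat.card_eq_fintype_card, ← Finset.card_univ, Finset.cast_card,
      ← Finset.sum_add_distrib]
    refine Finset.sum_congr rfl (fun x _ => ?_)
    rcases hF x with h | h <;> rw [h] <;> norm_num
  have hl : ∀ g : G, g ≠ 1 →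
      4 * (Nat.card {p : D × D // (p.1 : G) * (p.2 : G)⁻¹ = g} : ℤ) =
        Nat.card G + 2 * ∑ x, F x := by
    intro g hg
    have e : {p : D × D // (p.1 : G) * (p.2 : G)⁻¹ = g} ≃ {x : G // F (g * x) = 1 ∧ F x = 1} :=
      { toFun := fun p => ⟨p.1.2, by
          have h := p.2
          rw [mul_inv_eq_iff_eq_mul] at h
          rw [← h]
          exact ⟨p.1.1.2, p.1.2.2⟩⟩
        invFun := fun x => ⟨(⟨g * x, x.2.1⟩, ⟨x, x.2.2⟩), by simp⟩
        left_inv := by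
          rintro ⟨⟨a, b⟩, h⟩
          have h' : (a : G) * (b : G)⁻¹ = g := h
          rw [mul_inv_eq_iff_eq_mul] at h'
          apply Subtype.ext
          apply Prod.ext
          · exact Subtype.ext h'.symm
          · rfl
        right_inv := fun x => rfl }
    have h1 : (Nat.card {x : G // F (g * x) = 1 ∧ F x = 1} : ℤ) =
        ∑ x, if F (g * x) = 1 ∧ F x = 1 then (1 : ℤ) else 0 := by
      rw [Nat.card_eq_fintype_card, Finset.sum_boole, Fintype.card_subtype]
    have h2 : ∑ x, F (g * x) = ∑ x, F x := Equiv.sum_comp (Equiv.mulLeft g) F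
    have h3 : (Nat.card G : ℤ) + 2 * ∑ x, F x =
        ∑ x, (1 + F (g * x) + F x + F (g * x) * F x) := by
      rw [Finset.sum_add_distrib, hsum g hg, Finset.sum_add_distrib, Finset.sum_add_distrib, h2]
      simp [Nat.card_eq_fintype_card]
      ring
    rw [Nat.card_congr e, h1, h3, Finset.mul_sum]
    refine Finset.sum_congr rfl (fun x _ => ?_)
    rcases hF x with h | h <;> rcases hF (g * x) with h' | h' <;> rw [h, h'] <;> norm_num
  obtain ⟨g₀, hg₀⟩ := exists_ne (1 : G)
  refine ⟨D, Nat.card D, Nat.card {p : D × D // (p.1 : G) * (p.2 : G)⁻¹ = g₀}, rfl,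
    fun g hg => ?_, ?_⟩
  · have h1 := hl g hg
    have h2 := hl g₀ hg₀
    omega
  · have h2 := hl g₀ hg₀
    omega

/-! ### Sign characters of elementary abelian `2`-groups -/

lemma hasEnoughRootsOfUnity_int_two : HasEnoughRootsOfUnity ℤ 2 where
  prim := ⟨-1, IsPrimitiveRoot.neg_one 0 (by norm_num)⟩
  cyc := inferInstance

section characters

variable {E : Type*} [CommGroup E]

lemma hasEnoughRootsOfUnity_of_sq [Nontrivial E] (hE : ∀ e : E, e ^ 2 = 1) :
    HasEnoughRootsOfUnity ℤ (Monoid.exponent E) := by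
  have h : Monoid.exponent E = 2 := by
    refine ((Nat.dvd_prime Nat.prime_two).1
      (Monoid.exponent_dvd_of_forall_pow_eq_one hE)).resolve_left (fun h => ?_)
    exact not_subsingleton E (Monoid.exp_eq_one_iff.1 h)
  rw [h]
  exact hasEnoughRootsOfUnity_int_two

lemma card_sign_characters [Finite E] [Nontrivial E] (hE : ∀ e : E, e ^ 2 = 1) :
    Nat.card (E →* ℤˣ) = Nat.card E := by
  have := hasEnoughRootsOfUnity_of_sq hE
  exact CommGroup.card_monoidHom_of_hasEnoughRootsOfUnity E ℤ

lemma sum_sign_characters [Finite E] [Nontrivial E] [Fintype (E →* ℤˣ)]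
    (hE : ∀ e : E, e ^ 2 = 1) {e : E} (he : e ≠ 1) : ∑ χ : E →* ℤˣ, ((χ e : ℤˣ) : ℤ) = 0 := by
  have := hasEnoughRootsOfUnity_of_sq hE
  obtain ⟨φ, hφ⟩ := CommGroup.exists_apply_ne_one_of_hasEnoughRootsOfUnity E ℤ he
  have hφ' : φ e = -1 := (Int.units_eq_one_or _).resolve_left hφ
  have h := Equiv.sum_comp (Equiv.mulLeft φ) (fun χ : E →* ℤˣ => ((χ e : ℤˣ) : ℤ))
  simp only [Equiv.coe_mulLeft, MonoidHom.mul_apply, hφ', Units.val_neg, neg_one_mul,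
    Finset.sum_neg_distrib] at h
  omega

end characters

/-- The action of `G` on the sign characters of a normal subgroup: `(g • χ) e = χ (g⁻¹ * e * g)`. -/
@[reducible] def conjCharAction {G : Type*} [Group G] (E : Subgroup G) [E.Normal] :
    MulAction G (E →* ℤˣ) where
  smul g χ := χ.comp (MulAut.conjNormal g⁻¹).toMonoidHom
  one_smul χ := by
    change χ.comp (MulAut.conjNormal (1 : G)⁻¹).toMonoidHom = χ
    ext e
    simp
  mul_smul g h χ := by
    change χ.comp (MulAut.conjNormal (g * h)⁻¹).toMonoidHom =
      (χ.comp (MulAut.conjNormal h⁻¹).toMonoidHom).comp (MulAut.conjNormal g⁻¹).toMonoidHom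
    ext e
    simp [mul_inv_rev]

/-! ### Existence of the difference set -/

theorem main_result {G : Type*} [Group G] [Finite G] (d r : ℕ) (hd : 1 ≤ d)
    (hr2 : 2 ≤ r) (hrd : r ≤ d + 1) (hG : Nat.card G = 2 ^ (2 * d + 2))
    (K : Subgroup G) [K.Normal] (hab : ∀ x y : K, x * y = y * x)
    (hindex : K.index = 2 ^ r) (hrank : Group.rank K = r)
    (hexp : Monoid.exponent K ≤ 2 ^ (d + 2 - r)) :
    IsHadamardGroup G := by
  classical
  have : Fintype G := Fintype.ofFinite G
  let : CommGroup K := { K.toGroup with mul_comm := hab }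
  have hnt : Nontrivial G := by
    rw [← Finite.one_lt_card_iff_nontrivial, hG]
    exact Nat.one_lt_two_pow (by omega)
  obtain ⟨m, rfl⟩ : ∃ m, d = m + r - 1 := ⟨d + 1 - r, by omega⟩
  -- the exponent of the `2`-group `K` is a power of `2`, so the bound is a divisibility
  have hexpK : ∀ x : K, x ^ 2 ^ (m + 1) = 1 := by
    have hdvd : Monoid.exponent K ∣ 2 ^ (2 * (m + r - 1) + 2) :=
      (Group.exponent_dvd_nat_card).trans (hG ▸ K.card_subgroup_dvd_card)
    obtain ⟨a, -, ha⟩ := (Nat.dvd_prime_pow Nat.prime_two).1 hdvd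
    rw [ha, Nat.pow_le_pow_iff_right (by norm_num)] at hexp
    intro x
    refine orderOf_dvd_iff_pow_eq_one.1 ((Monoid.order_dvd_exponent x).trans ?_)
    rw [ha]
    exact pow_dvd_pow 2 (by omega)
  have hcardE := card_involutions (K := K) hexpK
  rw [hrank] at hcardE
  have hcardK : Nat.card K = 2 ^ r * 4 ^ m := by
    have h := K.card_mul_index
    rw [hindex, hG, show 2 * (m + r - 1) + 2 = r + 2 * m + r by omega, pow_add] at h
    rw [Nat.eq_of_mul_eq_mul_right (by positivity) h, pow_add, pow_mul]
    norm_num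
  have hindexE : (powMonoidHom 2 : K →* K).ker.index = 4 ^ m := by
    have h := (powMonoidHom 2 : K →* K).ker.card_mul_index
    rw [hcardE, hcardK] at h
    exact Nat.eq_of_mul_eq_mul_left (by positivity) h
  let E : Subgroup G := (powMonoidHom 2 : K →* K).ker.map K.subtype
  have hmemE : ∀ k : K, (k : G) ∈ E ↔ k ^ 2 = 1 := fun k => by
    change (k : G) ∈ Subgroup.map _ _ ↔ _
    rw [← Subgroup.coe_subtype, Subgroup.mem_map_iff_mem K.subtype_injective]
    rfl
  have hEK : E ≤ K := Subgroup.map_subtype_le _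
  have hEn : E.Normal := ⟨fun n hn g => by
    have hc : g * n * g⁻¹ ∈ K := Subgroup.Normal.conj_mem ‹_› n (hEK hn) g
    have h2 := (hmemE ⟨n, hEK hn⟩).1 hn
    rw [Subtype.ext_iff] at h2
    refine (hmemE ⟨_, hc⟩).2 (Subtype.ext ?_)
    change (g * n * g⁻¹) ^ 2 = 1
    rw [conj_pow, show n ^ 2 = 1 from h2]
    simp⟩
  let : CommGroup E := { E.toGroup with
    mul_comm := fun a b => by
      have h := congrArg (fun k : K => (k : G)) (hab ⟨a, hEK a.2⟩ ⟨b, hEK b.2⟩)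
      exact Subtype.ext h }
  have hE2 : ∀ e : E, e ^ 2 = 1 := fun e => by
    have h := (hmemE ⟨e, hEK e.2⟩).1 e.2
    have h' := congrArg (fun k : K => (k : G)) h
    exact Subtype.ext h'
  have hcE : Nat.card E = 2 ^ r := by
    rw [← hcardE]
    exact Subgroup.card_map_of_injective K.subtype_injective
  have hEnt : Nontrivial E := by
    rw [← Finite.one_lt_card_iff_nontrivial, hcE]
    exact Nat.one_lt_two_pow (by omega)
  have : Finite (E →* ℤˣ) := Nat.finite_of_card_ne_zero (by
    rw [card_sign_characters hE2, hcE]; positivity)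
  have : Fintype (E →* ℤˣ) := Fintype.ofFinite _
  let := conjCharAction E
  obtain ⟨θ, hθ, hθs⟩ := exists_transversal hG ((card_sign_characters hE2).trans hcE)
    (ι := G ⧸ K) (by rw [← hindex]; rfl) (1 : E →* ℤˣ)
    (fun g => MonoidHom.one_comp _) Quotient.out
  -- the coset representatives attached to the characters, for which `χ ↦ t χ • χ` is a permutation
  let t : (E →* ℤˣ) → G := fun χ => (θ χ).out
  -- one signature function on `K` for each character of `E`
  let sgn : (E →* ℤˣ) → K → ℤ := fun χ k =>
    if h : (k : G) ∈ E then ((χ ⟨k, h⟩ : ℤˣ) : ℤ) else 1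
  have hsgn : ∀ χ (k : K) (h : (k : G) ∈ E), sgn χ k = ((χ ⟨k, h⟩ : ℤˣ) : ℤ) :=
    fun χ k h => dif_pos h
  have hunit : ∀ u : ℤˣ, (u : ℤ) = 1 ∨ (u : ℤ) = -1 := fun u => by
    rcases Int.units_eq_one_or u with rfl | rfl <;> simp
  have hsign : ∀ χ, IsSignOn (sgn χ) := fun χ =>
    ⟨fun e he => by rw [hsgn χ e ((hmemE e).2 he)]; exact hunit _, fun a b ha hb => by
      rw [hsgn χ a ((hmemE a).2 ha), hsgn χ b ((hmemE b).2 hb), hsgn χ (a * b)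
        ((hmemE _).2 (by rw [mul_pow, ha, hb, one_mul])), ← Units.val_mul, ← map_mul]
      rfl⟩
  choose B hB using fun χ => exists_signature m K hexpK hindexE (sgn χ) (hsign χ)
  have hmk : ∀ χ (k : K), (QuotientGroup.mk (t χ * k) : G ⧸ K) = θ χ := fun χ k => by
    rw [QuotientGroup.mk_mul_of_mem _ k.2]
    exact QuotientGroup.out_eq' _
  let φ : (E →* ℤˣ) × K ≃ G := Equiv.ofBijective (fun p => t p.1 * p.2) ⟨by
    rintro ⟨χ, k⟩ ⟨ψ, l⟩ h
    simp only at h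
    have h1 : χ = ψ := hθ.1 (by rw [← hmk χ k, ← hmk ψ l, h])
    subst h1
    rw [Subtype.ext (mul_left_cancel h)], fun x => by
    obtain ⟨χ, hχ⟩ := hθ.2 (QuotientGroup.mk x)
    have hx : (t χ)⁻¹ * x ∈ K := QuotientGroup.eq.1 ((QuotientGroup.out_eq' (θ χ)).trans hχ)
    exact ⟨(χ, ⟨_, hx⟩), mul_inv_cancel_left _ _⟩⟩
  have hφ : ∀ χ k, φ (χ, k) = t χ * k := fun _ _ => rfl
  -- `F (t χ * k) = B χ k`
  let F : G → ℤ := fun x => B (φ.symm x).1 (φ.symm x).2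
  have hFt : ∀ χ (k : K), F (t χ * k) = B χ k := fun χ k => by
    change B (φ.symm (t χ * k)).1 (φ.symm (t χ * k)).2 = _
    rw [← hφ, Equiv.symm_apply_apply]
  refine isHadamardGroup_of_sign F (fun x => (hB _).eq_or _) (fun g hg => ?_)
  have hsum : ∑ x, F (g * x) * F x = ∑ χ, ∑ k : K, F (g * (t χ * k)) * B χ k := by
    rw [← Equiv.sum_comp φ, Fintype.sum_prod_type]
    simp only [hφ, hFt]
  rw [hsum]
  by_cases hgK : g ∈ K
  · have hconj : ∀ χ, (t χ)⁻¹ * g * t χ ∈ K := fun χ => by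
      simpa using Subgroup.Normal.conj_mem ‹K.Normal› g hgK (t χ)⁻¹
    have hF : ∀ χ (k : K), F (g * (t χ * k)) = B χ (⟨_, hconj χ⟩ * k) := fun χ k => by
      rw [← hFt]
      congr 1
      simp [mul_assoc]
    simp only [hF]
    by_cases hgE : g ∈ E
    · have hconjE : ∀ χ, (t χ)⁻¹ * g * t χ ∈ E := fun χ => by
        simpa using Subgroup.Normal.conj_mem hEn g hgE (t χ)⁻¹
      have hin : ∀ χ, ∑ k : K, B χ (⟨_, hconj χ⟩ * k) * B χ k =
          Nat.card K * (((t χ • χ) ⟨g, hgE⟩ : ℤˣ) : ℤ) := by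
        intro χ
        have hval : sgn χ ⟨_, hconj χ⟩ = (((t χ • χ) ⟨g, hgE⟩ : ℤˣ) : ℤ) := by
          rw [hsgn χ ⟨_, hconj χ⟩ (hconjE χ)]
          change _ = ((χ (MulAut.conjNormal (t χ)⁻¹ ⟨g, hgE⟩) : ℤˣ) : ℤ)
          congr 2
          apply Subtype.ext
          simp
        rw [Nat.card_eq_fintype_card, ← Finset.card_univ, ← hval, ← nsmul_eq_mul,
          ← Finset.sum_const]
        refine Finset.sum_congr rfl (fun k _ => ?_)
        rw [mul_comm _ k, (hB χ).map_mul _ _ ((hmemE ⟨_, hconj χ⟩).1 (hconjE χ)), mul_assoc]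
        rcases (hB χ).eq_or k with h | h <;> rw [h] <;> norm_num
      rw [Finset.sum_congr rfl (fun χ _ => hin χ), ← Finset.mul_sum]
      have h0 := hθs.sum_comp (fun χ : E →* ℤˣ => ((χ ⟨g, hgE⟩ : ℤˣ) : ℤ))
      rw [sum_sign_characters hE2 (fun h => hg (congrArg Subtype.val h))] at h0
      rw [show ∑ χ, (((t χ • χ) ⟨g, hgE⟩ : ℤˣ) : ℤ) = 0 from h0, mul_zero]
    · refine Finset.sum_eq_zero (fun χ _ => (hB χ).sum_eq_zero _ (fun h => hgE ?_))
      have h1 := (hmemE ⟨_, hconj χ⟩).2 h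
      simpa [mul_assoc] using Subgroup.Normal.conj_mem hEn _ h1 (t χ)
  · refine Finset.sum_eq_zero (fun χ _ => ?_)
    obtain ⟨⟨ψ, h⟩, hψ⟩ := φ.surjective (g * t χ)
    rw [hφ] at hψ
    -- `g` moves the coset of `χ` to that of another character `ψ`
    have hne : ψ ≠ χ := by
      rintro rfl
      refine hgK ?_
      have h1 := Subgroup.Normal.conj_mem ‹K.Normal› h h.2 (t ψ)
      rwa [hψ, mul_inv_cancel_right] at h1
    obtain ⟨e, he⟩ : ∃ e, ψ e ≠ χ e := by
      by_contra! hall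
      exact hne (MonoidHom.ext hall)
    have heE : (⟨e, hEK e.2⟩ : K) ^ 2 = 1 := (hmemE _).1 e.2
    have hF : ∀ k : K, F (g * (t χ * k)) = B ψ (h * k) := fun k => by
      rw [← hFt, ← mul_assoc, ← hψ]
      congr 1
      simp [mul_assoc]
    simp only [hF]
    -- translation by `e` changes the sign of each summand
    have hs := Equiv.sum_comp (Equiv.mulRight (⟨e, hEK e.2⟩ : K)) (fun k => B ψ (h * k) * B χ k)
    have hflip : sgn ψ ⟨e, hEK e.2⟩ * sgn χ ⟨e, hEK e.2⟩ = -1 := by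
      rw [hsgn ψ _ e.2, hsgn χ _ e.2]
      change ((ψ e : ℤˣ) : ℤ) * ((χ e : ℤˣ) : ℤ) = -1
      rcases Int.units_eq_one_or (ψ e) with h1 | h1 <;>
        rcases Int.units_eq_one_or (χ e) with h2 | h2 <;> rw [h1, h2] at he ⊢ <;> simp at he ⊢
    have hterm : ∀ k : K, B ψ (h * (k * ⟨e, hEK e.2⟩)) * B χ (k * ⟨e, hEK e.2⟩) =
        - (B ψ (h * k) * B χ k) := fun k => by
      rw [← mul_assoc, (hB ψ).map_mul _ _ heE, (hB χ).map_mul _ _ heE]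
      linear_combination (B ψ (h * k) * B χ k) * hflip
    simp only [Equiv.coe_mulRight, hterm, Finset.sum_neg_distrib] at hs
    omega
end

section
/- Let G be a group of order 16 containing a subgroup isomorphic to the quaternion group Q₈ of order 8 (QuaternionGroup 2). Then G contains a Hadamard difference set. -/
open QuaternionGroup

/-- A transversal of the centre of the quaternion group of order 8. -/
def quatTransversal : Finset (QuaternionGroup 2) := {a 0, a 1, xa 0, xa 1}

/-- The centre of the quaternion group of order 8. -/
def quatCenter : Finset (QuaternionGroup 2) := {a 0, a 2}

lemma quat_eq_of_mul_self :
    ∀ y : QuaternionGroup 2, y * y = 1 → y ≠ 1 → y = a 2 := by decide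

lemma quat_mul_self_a_two : (a 2 : QuaternionGroup 2) * a 2 = 1 := by decide

lemma quat_a_two_ne_one : (a 2 : QuaternionGroup 2) ≠ 1 := by decide

/-- The representations of a non-identity element of `Q₈` as a difference in the transversal or in
the centre: two in total. -/
lemma quat_count_same : ∀ q : QuaternionGroup 2, q ≠ 1 →
    (quatTransversal.filter fun x => q * x ∈ quatTransversal).card +
      (quatCenter.filter fun x => q * x ∈ quatCenter).card = 2 := by decide

lemma quat_count_coset : ∀ w : QuaternionGroup 2,
    (quatTransversal.filter fun x => w * x ∈ quatCenter).card = 1 := by decide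

lemma quat_count_coset' : ∀ q : QuaternionGroup 2,
    (quatCenter.filter fun x => q * x ∈ quatTransversal).card = 1 := by decide

/-- The pairs of elements of `D` with quotient `g` correspond to the `y ∈ D` with `g * y ∈ D`. -/
lemma card_pairs_eq {G : Type*} [Group G] [DecidableEq G] (D : Finset G) (g : G) :
    Nat.card {p : ↥(D : Set G) × ↥(D : Set G) // (p.1 : G) * (p.2 : G)⁻¹ = g} =
      (D.filter fun y => g * y ∈ D).card := by
  rw [← Nat.card_eq_finsetCard]
  refine Nat.card_congr
    { toFun := fun p => ⟨p.1.2, ?_⟩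
      invFun := fun y => ⟨(⟨g * y, (Finset.mem_filter.1 y.2).2⟩,
        ⟨y, (Finset.mem_filter.1 y.2).1⟩), by simp⟩
      left_inv := ?_
      right_inv := fun _ => rfl }
  · obtain ⟨⟨x, y⟩, rfl⟩ := p
    exact Finset.mem_filter.2 ⟨y.2, by simp⟩
  · rintro ⟨⟨x, y⟩, rfl⟩
    simp

theorem order16_with_quaternion_subgroup {G : Type*} [Group G] [Finite G]
    (hG : Nat.card G = 16) (Q : Subgroup G)
    (hQ : Nonempty (Q ≃* QuaternionGroup 2)) :
    IsHadamardGroup G := by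
  classical
  obtain ⟨φ⟩ := hQ
  have hcard : Nat.card Q = 8 := by
    rw [Nat.card_congr φ.toEquiv, Nat.card_eq_fintype_card, QuaternionGroup.card]
  have hindex : Q.index = 2 := by
    have := Q.card_mul_index
    rw [hcard, hG] at this
    omega
  have hnormal : Q.Normal := Subgroup.normal_of_index_eq_two hindex
  let e : QuaternionGroup 2 →* G := Q.subtype.comp φ.symm.toMonoidHom
  have he : Function.Injective e := Q.subtype_injective.comp φ.symm.injective
  have heQ : ∀ q, e q ∈ Q := fun q => (φ.symm q).2
  have hsurj : ∀ g ∈ Q, ∃ q, e q = g := fun g hg =>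
    ⟨φ ⟨g, hg⟩, by simp [e]⟩
  obtain ⟨t, ht⟩ : ∃ t, t ∉ Q := by
    by_contra! h
    have : Q = ⊤ := (Subgroup.eq_top_iff' Q).2 h
    rw [this, Subgroup.index_top] at hindex
    omega
  have hnot : ∀ q r, e q * t ≠ e r := fun q r h =>
    ht ((Q.mul_mem_cancel_left (heQ q)).1 (h ▸ heQ r))
  have hzt : t * e (a 2) = e (a 2) * t := by
    obtain ⟨y, hy⟩ := hsurj _ (hnormal.conj_mem _ (heQ (a 2)) t)
    have hyz : y = a 2 := by
      apply quat_eq_of_mul_self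
      · apply he
        rw [map_mul, hy, map_one]
        calc t * e (a 2) * t⁻¹ * (t * e (a 2) * t⁻¹) = t * (e (a 2) * e (a 2)) * t⁻¹ := by group
          _ = 1 := by rw [← map_mul, quat_mul_self_a_two]; simp
      · rintro rfl
        rw [map_one, eq_comm, conj_eq_one_iff, ← map_one e] at hy
        exact quat_a_two_ne_one (he hy)
    rw [hyz] at hy
    exact (eq_mul_inv_iff_mul_eq.1 hy).symm
  have hcomm : ∀ x ∈ quatCenter, t * e x = e x * t := by
    intro x hx
    simp only [quatCenter, Finset.mem_insert, Finset.mem_singleton] at hx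
    rcases hx with rfl | rfl
    · rw [a_zero, map_one, mul_one, one_mul]
    · exact hzt
  let E₁ : QuaternionGroup 2 ↪ G := ⟨e, he⟩
  let E₂ : QuaternionGroup 2 ↪ G := ⟨fun q => e q * t, fun _ _ h => he (mul_right_cancel h)⟩
  let D : Finset G := quatTransversal.map E₁ ∪ quatCenter.map E₂
  have hD₁ : ∀ q, e q ∈ D ↔ q ∈ quatTransversal := by
    intro q
    simp only [D, Finset.mem_union, Finset.mem_map, E₁, E₂, Function.Embedding.coeFn_mk]
    constructor
    · rintro (⟨x, hx, h⟩ | ⟨x, hx, h⟩)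
      · exact he h ▸ hx
      · exact absurd h (hnot _ _)
    · exact fun h => Or.inl ⟨q, h, rfl⟩
  have hD₂ : ∀ q, e q * t ∈ D ↔ q ∈ quatCenter := by
    intro q
    simp only [D, Finset.mem_union, Finset.mem_map, E₁, E₂, Function.Embedding.coeFn_mk]
    constructor
    · rintro (⟨x, hx, h⟩ | ⟨x, hx, h⟩)
      · exact absurd h.symm (hnot _ _)
      · exact he (mul_right_cancel h) ▸ hx
    · exact fun h => Or.inr ⟨q, h, rfl⟩
  have hdisj : Disjoint (quatTransversal.map E₁) (quatCenter.map E₂) := by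
    rw [Finset.disjoint_left]
    simp only [Finset.mem_map, E₁, E₂, Function.Embedding.coeFn_mk]
    rintro _ ⟨x, _, rfl⟩ ⟨y, _, h⟩
    exact hnot _ _ h
  have hcount : ∀ g, (D.filter fun y => g * y ∈ D).card =
      (quatTransversal.filter fun x => g * e x ∈ D).card +
        (quatCenter.filter fun x => g * (e x * t) ∈ D).card := by
    intro g
    conv_lhs => rw [show D.filter (fun y => g * y ∈ D) =
      (quatTransversal.map E₁ ∪ quatCenter.map E₂).filter (fun y => g * y ∈ D) from rfl]
    rw [Finset.filter_union, Finset.card_union_of_disjoint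
      (Finset.disjoint_filter_filter hdisj), Finset.filter_map, Finset.filter_map,
      Finset.card_map, Finset.card_map]
    rfl
  refine ⟨D, 6, 2, ?_, ?_, by omega⟩
  · rw [Nat.card_coe_set_eq, Set.ncard_coe_finset, Finset.card_union_of_disjoint hdisj,
      Finset.card_map, Finset.card_map]
    decide
  intro g hg
  rw [card_pairs_eq, hcount]
  by_cases hgQ : g ∈ Q
  · obtain ⟨q, rfl⟩ := hsurj g hgQ
    have hq : q ≠ 1 := by
      rintro rfl
      exact hg (map_one e)
    simp only [← mul_assoc, ← map_mul, hD₁, hD₂]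
    exact quat_count_same q hq
  · obtain ⟨q, hq⟩ := hsurj (g * t) ((Subgroup.mul_mem_iff_of_index_two hindex).2 (by tauto))
    obtain ⟨w, hw⟩ := hsurj (t⁻¹ * g) ((Subgroup.mul_mem_iff_of_index_two hindex).2
      (by simp only [inv_mem_iff]; tauto))
    -- `t` centralises `e Z`, so `g * e x = t * e (w * x)` lies in `e Z * t` exactly when
    -- `w * x` lies in `Z`.
    have h₁ : ∀ x, g * e x ∈ D ↔ w * x ∈ quatCenter := by
      intro x
      have hx : g * e x = t * e (w * x) := by
        rw [map_mul, hw]; group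
      rw [hx]
      constructor
      · intro h
        simp only [D, Finset.mem_union, Finset.mem_map, E₁, E₂, Function.Embedding.coeFn_mk] at h
        rcases h with ⟨y, _, h⟩ | ⟨y, hy, h⟩
        · exact absurd ((Q.mul_mem_cancel_right (heQ (w * x))).1 (h ▸ heQ y)) ht
        · replace h : e y * t = t * e (w * x) := h
          rw [← hcomm y hy] at h
          exact he (mul_left_cancel h) ▸ hy
      · intro h
        rw [hcomm _ h]
        exact (hD₂ _).2 h
    have h₂ : ∀ x ∈ quatCenter, (g * (e x * t) ∈ D ↔ q * x ∈ quatTransversal) := by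
      intro x hx
      rw [← hcomm x hx, ← mul_assoc, ← hq, ← map_mul, hD₁]
    rw [Finset.filter_congr fun x _ => h₁ x, Finset.filter_congr h₂, quat_count_coset,
      quat_count_coset']
end
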